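/- arXiv:1207.0724 — 6 statements merged into one kernel-verified Lean document; each statement's English description precedes it below -/
import Mathlib

section
/- Let K be a compact Hausdorff topological group such that the closure of the commutator subgroup of K equals K itself. Then the center of K is totally disconnected; being compact, it is therefore a profinite group. -/
/-!
Let `Z` be the intersection of the center of `K` with the closure of its commutator subgroup, and
let `ρ` be a continuous irreducible complex representation of `K` of finite dimension `n`. By
Schur's lemma `z ∈ Z` acts by a scalar `c`, and `c ^ n = det (ρ z) = 1` because the continuous
character `det ∘ ρ` is trivial on commutators. As there are finitely many `n`-th roots of unity,
the identity component of `Z` acts trivially.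

It remains to see that such representations separate the points of `K`, as the Peter–Weyl theorem
says. The regular representation on `L²(K)` is faithful. In any continuous unitary representation,
averaging the rank-one operators attached to the orbit of a nonzero vector gives a nonzero compact
self-adjoint intertwiner, whose eigenspaces are finite-dimensional subrepresentations. Applied in
the orthogonal complement of all irreducible finite-dimensional subrepresentations, this shows
that their sum is dense.
-/

open MeasureTheory Module
open scoped InnerProductSpace

section Irreducible

variable {k G V : Type*} [Field k] [Monoid G] [AddCommGroup V] [Module k V]
  {ρ : Representation k G V}

theorem exists_eq_smul_one_of_mem_center [IsAlgClosed k] [FiniteDimensional k V]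
    [ρ.IsIrreducible] {z : G} (hz : z ∈ Submonoid.center G) : ∃ c : k, ρ z = c • 1 := by
  obtain ⟨c, hc⟩ :=
    (Representation.IsIrreducible.algebraMap_intertwiningMap_bijective_of_isAlgClosed
      (ρ := ρ)).2 (.centralMul ρ z hz)
  exact ⟨c, congrArg Representation.IntertwiningMap.toLinearMap hc.symm⟩

theorem isIrreducible_toRepresentation_of_isAtom {σ : Subrepresentation ρ} (hσ : IsAtom σ) :
    σ.toRepresentation.IsIrreducible := by
  have ne_bot : σ.toSubmodule ≠ ⊥ := fun h ↦ hσ.1 (Subrepresentation.toSubmodule_injective h)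
  have : Nontrivial (Subrepresentation σ.toRepresentation) := by
    have := Submodule.nontrivial_iff_ne_bot.2 ne_bot
    exact ⟨⊥, ⊤, fun h ↦ bot_ne_top (congrArg Subrepresentation.toSubmodule h)⟩
  refine ⟨fun τ ↦ ?_⟩
  let image : Subrepresentation ρ :=
    { toSubmodule := τ.toSubmodule.map σ.toSubmodule.subtype
      apply_mem_toSubmodule := by
        rintro g _ ⟨w, hw, rfl⟩
        exact ⟨σ.toRepresentation g w, τ.apply_mem_toSubmodule g hw, rfl⟩ }
  have image_le : image ≤ σ := Submodule.map_subtype_le σ.toSubmodule τ.toSubmodule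
  have map_injective := Submodule.map_injective_of_injective σ.toSubmodule.subtype_injective
  refine (hσ.le_iff.1 image_le).imp (fun h ↦ ?_) (fun h ↦ ?_) <;>
    refine Subrepresentation.toSubmodule_injective (map_injective ?_)
  · exact (congrArg Subrepresentation.toSubmodule h).trans (Submodule.map_bot _).symm
  · exact (congrArg Subrepresentation.toSubmodule h).trans (Submodule.map_subtype_top _).symm

theorem exists_isAtom_le_of_finiteDimensional {E : Subrepresentation ρ}
    [FiniteDimensional k E.toSubmodule] (hE : E ≠ ⊥) : ∃ σ ≤ E, IsAtom σ := by
  obtain ⟨σ, ⟨σ_le, σ_ne⟩, σ_min⟩ := exists_minimalFor_of_wellFoundedLT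
    (fun σ : Subrepresentation ρ ↦ σ ≤ E ∧ σ ≠ ⊥) (fun σ ↦ finrank k σ.toSubmodule) ⟨E, le_rfl, hE⟩
  have : FiniteDimensional k σ.toSubmodule := Submodule.finiteDimensional_of_le σ_le
  refine ⟨σ, σ_le, σ_ne, fun τ hτ ↦ by_contra fun τ_ne ↦ ?_⟩
  have finrank_lt : finrank k τ.toSubmodule < finrank k σ.toSubmodule :=
    Submodule.finrank_lt_finrank_of_lt hτ
  exact finrank_lt.not_ge (σ_min ⟨hτ.le.trans σ_le, τ_ne⟩ finrank_lt.le)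

end Irreducible

section FiniteDimensional

theorem map_eq_one_of_mem_topologicalClosure_commutator {G M : Type*} [Group G]
    [TopologicalSpace G] [IsTopologicalGroup G] [CommMonoid M] [TopologicalSpace M] [T1Space M]
    {χ : G →* M} (hχ : Continuous χ) {z : G} (hz : z ∈ (commutator G).topologicalClosure) :
    χ z = 1 := by
  have commutator_subset : (commutator G : Set G) ⊆ χ ⁻¹' {1} := fun g hg ↦
    congrArg Units.val (Abelianization.commutator_subset_ker χ.toHomUnits hg)
  exact closure_minimal commutator_subset (isClosed_singleton.preimage hχ) hz

variable {𝕜 V : Type*} [NontriviallyNormedField 𝕜] [CompleteSpace 𝕜]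
  [AddCommGroup V] [Module 𝕜 V] [FiniteDimensional 𝕜 V]
  [TopologicalSpace V] [IsTopologicalAddGroup V] [ContinuousSMul 𝕜 V] [T2Space V]

theorem continuous_det_of_continuous_apply {X : Type*} [TopologicalSpace X] {f : X → End 𝕜 V}
    (hf : ∀ v, Continuous fun x ↦ f x v) : Continuous fun x ↦ LinearMap.det (f x) := by
  let b := finBasis 𝕜 V
  simp only [← LinearMap.det_toMatrix b]
  refine Continuous.matrix_det (continuous_matrix fun i j ↦ ?_)
  simp only [LinearMap.toMatrix_apply]
  exact (b.coord i).continuous_of_finiteDimensional.comp (hf (b j))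

variable {G : Type*} [Group G] [TopologicalSpace G] [IsTopologicalGroup G]
  {ρ : Representation 𝕜 G V}

theorem pow_finrank_eq_one_of_eq_smul_one (hρ : ∀ v, Continuous fun g ↦ ρ g v) {z : G}
    (hz : z ∈ (commutator G).topologicalClosure) {c : 𝕜} (hc : ρ z = c • 1) :
    c ^ finrank 𝕜 V = 1 := by
  have det_eq_one : LinearMap.det (ρ z) = 1 :=
    map_eq_one_of_mem_topologicalClosure_commutator (χ := LinearMap.det.comp ρ)
      (continuous_det_of_continuous_apply hρ) hz
  simpa [hc, LinearMap.det_smul] using det_eq_one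

theorem eq_one_of_mem_connectedComponent_center_inf [IsAlgClosed 𝕜] [ρ.IsIrreducible]
    (hρ : ∀ v, Continuous fun g ↦ ρ g v)
    {z : ↥(Subgroup.center G ⊓ (commutator G).topologicalClosure)}
    (hz : z ∈ connectedComponent 1) : ρ z = 1 := by
  ext v
  cases subsingleton_or_nontrivial V
  · exact Subsingleton.elim _ _
  have roots_finite : {c : 𝕜 | c ^ finrank 𝕜 V = 1}.Finite := by
    refine (Polynomial.nthRootsFinset (finrank 𝕜 V) (1 : 𝕜)).finite_toSet.subset fun c hc ↦ ?_
    simpa [Polynomial.mem_nthRootsFinset finrank_pos] using hc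
  have mapsTo_multiples : Set.MapsTo
      (fun y : ↥(Subgroup.center G ⊓ (commutator G).topologicalClosure) ↦ ρ y v)
      (connectedComponent 1) ((· • v) '' {c : 𝕜 | c ^ finrank 𝕜 V = 1}) := fun y _ ↦ by
    obtain ⟨c, hc⟩ := exists_eq_smul_one_of_mem_center (ρ := ρ) y.2.1
    exact ⟨c, pow_finrank_eq_one_of_eq_smul_one hρ y.2.2 hc, by simp [hc]⟩
  simpa using isPreconnected_connectedComponent.constant_of_mapsTo (roots_finite.image _).isDiscrete
    ((hρ v).comp continuous_subtype_val).continuousOn mapsTo_multiples hz mem_connectedComponent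

end FiniteDimensional

/-- A representation on a complex inner product space that is unitary and strongly continuous.
Surjectivity of `ρ g` is automatic, since `G` is a group. -/
structure IsContinuousUnitary {G H : Type*} [Group G] [TopologicalSpace G]
    [NormedAddCommGroup H] [InnerProductSpace ℂ H] (ρ : Representation ℂ G H) : Prop where
  norm_map (g : G) (v : H) : ‖ρ g v‖ = ‖v‖
  continuous_apply (v : H) : Continuous fun g ↦ ρ g v

/-- The average over `x ∈ G` of the rank-one operators `w ↦ ⟪ρ x v, w⟫ • ρ x v`, the device that
produces finite-dimensional subrepresentations. It is the junk value `0` unless the integrand is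
integrable, as it is for continuous unitary `ρ` and compact `G`. -/
noncomputable def orbitAverage {G H : Type*} [Group G] [MeasurableSpace G]
    [NormedAddCommGroup H] [InnerProductSpace ℂ H] (μ : Measure G) (ρ : Representation ℂ G H)
    (v : H) : H →L[ℂ] H :=
  ∫ x, InnerProductSpace.rankOne ℂ (ρ x v) (ρ x v) ∂μ

namespace IsContinuousUnitary

variable {G H : Type*} [Group G] [TopologicalSpace G]
  [NormedAddCommGroup H] [InnerProductSpace ℂ H] {ρ : Representation ℂ G H}

theorem inner_map_map (hρ : IsContinuousUnitary ρ) (g : G) (v w : H) :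
    ⟪ρ g v, ρ g w⟫_ℂ = ⟪v, w⟫_ℂ :=
  LinearIsometry.inner_map_map ⟨ρ g, hρ.norm_map g⟩ v w

theorem inner_map_right (hρ : IsContinuousUnitary ρ) (g : G) (v w : H) :
    ⟪v, ρ g w⟫_ℂ = ⟪ρ g⁻¹ v, w⟫_ℂ := by
  rw [← hρ.inner_map_map g (ρ g⁻¹ v) w, ρ.self_inv_apply]

theorem continuous_map (hρ : IsContinuousUnitary ρ) (g : G) : Continuous (ρ g) :=
  LinearIsometry.continuous ⟨ρ g, hρ.norm_map g⟩

theorem map_mem_orthogonal (hρ : IsContinuousUnitary ρ) (σ : Subrepresentation ρ) (g : G) {v : H}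
    (hv : v ∈ σ.toSubmoduleᗮ) : ρ g v ∈ σ.toSubmoduleᗮ := fun w hw ↦ by
  rw [hρ.inner_map_right]
  exact hv _ (σ.apply_mem_toSubmodule g⁻¹ hw)

section OrbitAverage

variable [CompactSpace G] [MeasurableSpace G] [BorelSpace G]

theorem integrable_rankOne_orbit (hρ : IsContinuousUnitary ρ) (μ : Measure G) [IsFiniteMeasure μ]
    (v : H) : Integrable (fun x ↦ InnerProductSpace.rankOne ℂ (ρ x v) (ρ x v)) μ := by
  have hc : Continuous fun x ↦ InnerProductSpace.rankOne ℂ (ρ x v) (ρ x v) :=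
    (ContinuousLinearMap.smulRightL ℂ H H).continuous₂.comp
      (((innerSL ℂ).continuous.comp (hρ.continuous_apply v)).prodMk (hρ.continuous_apply v))
  exact hc.integrable_of_hasCompactSupport (.of_compactSpace _)

variable [CompleteSpace H]

theorem isCompactOperator_orbitAverage {μ : Measure G} [IsProbabilityMeasure μ]
    (hρ : IsContinuousUnitary ρ) (v : H) : IsCompactOperator (orbitAverage μ ρ v) := by
  have hconv : Convex ℝ {T : H →L[ℂ] H | IsCompactOperator T} :=
    fun S hS T hT a b _ _ _ ↦ (hS.smul a).add (hT.smul b)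
  refine hconv.integral_mem isClosed_setOfPred_isCompactOperator (ae_of_all _ fun x ↦ ?_)
    (hρ.integrable_rankOne_orbit μ v)
  exact (isCompactOperator_of_locallyCompactSpace_rng
    (ContinuousLinearMap.toSpanSingleton ℂ (ρ x v))).comp_clm (innerSL ℂ (ρ x v))

variable {μ : Measure G} [IsFiniteMeasure μ]

theorem inner_orbitAverage_apply (hρ : IsContinuousUnitary ρ) (v w u : H) :
    ⟪w, orbitAverage μ ρ v u⟫_ℂ = ∫ x, ⟪ρ x v, u⟫_ℂ * ⟪w, ρ x v⟫_ℂ ∂μ := by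
  have hi := hρ.integrable_rankOne_orbit μ v
  rw [orbitAverage, ContinuousLinearMap.integral_apply hi,
    ← integral_inner (hi.apply_continuousLinearMap u)]
  simp only [InnerProductSpace.rankOne_apply, inner_smul_right]

theorem isSymmetric_orbitAverage (hρ : IsContinuousUnitary ρ) (v : H) :
    (orbitAverage μ ρ v).IsSymmetric := fun u w ↦ by
  change ⟪orbitAverage μ ρ v u, w⟫_ℂ = ⟪u, orbitAverage μ ρ v w⟫_ℂ
  rw [← inner_conj_symm, hρ.inner_orbitAverage_apply, hρ.inner_orbitAverage_apply, ← integral_conj]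
  simp only [map_mul, inner_conj_symm, mul_comm]

theorem orbitAverage_map [IsTopologicalGroup G] [μ.IsMulLeftInvariant]
    (hρ : IsContinuousUnitary ρ) (v : H) (g : G) (u : H) :
    orbitAverage μ ρ v (ρ g u) = ρ g (orbitAverage μ ρ v u) := by
  refine ext_inner_left ℂ fun w ↦ ?_
  calc ⟪w, orbitAverage μ ρ v (ρ g u)⟫_ℂ
      = ∫ x, ⟪ρ x v, ρ g u⟫_ℂ * ⟪w, ρ x v⟫_ℂ ∂μ := hρ.inner_orbitAverage_apply v w _
    _ = ∫ x, ⟪ρ (g * x) v, ρ g u⟫_ℂ * ⟪w, ρ (g * x) v⟫_ℂ ∂μ :=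
      (integral_mul_left_eq_self _ g).symm
    _ = ∫ x, ⟪ρ x v, u⟫_ℂ * ⟪ρ g⁻¹ w, ρ x v⟫_ℂ ∂μ := by
      simp only [map_mul, Module.End.mul_apply, hρ.inner_map_map, hρ.inner_map_right g w]
    _ = ⟪w, ρ g (orbitAverage μ ρ v u)⟫_ℂ := by
      rw [hρ.inner_map_right, hρ.inner_orbitAverage_apply]

theorem orbitAverage_ne_zero [μ.IsOpenPosMeasure] (hρ : IsContinuousUnitary ρ) {v : H}
    (hv : v ≠ 0) : orbitAverage μ ρ v ≠ 0 := by
  intro h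
  have integral_pos : 0 < ∫ x, ‖⟪ρ x v, v⟫_ℂ‖ ^ 2 ∂μ := by
    have := hρ.continuous_apply v
    refine Continuous.integral_pos_of_hasCompactSupport_nonneg_nonzero (x := (1 : G))
      (by fun_prop) (.of_compactSpace _) (fun x ↦ by positivity) ?_
    simpa using hv
  have inner_eq : ⟪v, orbitAverage μ ρ v v⟫_ℂ = (∫ x, ‖⟪ρ x v, v⟫_ℂ‖ ^ 2 ∂μ : ℝ) := by
    rw [hρ.inner_orbitAverage_apply, ← integral_complex_ofReal]
    congr with x
    rw [← inner_conj_symm v, Complex.mul_conj, Complex.normSq_eq_norm_sq]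
  rw [h, zero_apply, inner_zero_right, eq_comm, Complex.ofReal_eq_zero] at inner_eq
  exact integral_pos.ne' inner_eq

theorem orbitAverage_apply_mem (hρ : IsContinuousUnitary ρ) {M : Subrepresentation ρ}
    (hM : IsClosed (M.toSubmodule : Set H)) {v : H} (hv : v ∈ M.toSubmodule) (u : H) :
    orbitAverage μ ρ v u ∈ M.toSubmodule := by
  have := hM.completeSpace_coe
  rw [← M.toSubmodule.orthogonal_orthogonal]
  intro w hw
  have orthogonal_orbit (x : G) : ⟪w, ρ x v⟫_ℂ = 0 :=
    Submodule.inner_left_of_mem_orthogonal (M.apply_mem_toSubmodule x hv) hw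
  simp only [hρ.inner_orbitAverage_apply, orthogonal_orbit, mul_zero, integral_zero]

end OrbitAverage

section PeterWeyl

variable [IsTopologicalGroup G] [CompactSpace G] [CompleteSpace H]

theorem exists_finiteDimensional_le (hρ : IsContinuousUnitary ρ) {M : Subrepresentation ρ}
    (hM : IsClosed (M.toSubmodule : Set H)) (hM₀ : M.toSubmodule ≠ ⊥) :
    ∃ E ≤ M, E ≠ ⊥ ∧ FiniteDimensional ℂ E.toSubmodule := by
  borelize G
  let μ : Measure G := .haarMeasure ⊤
  have : IsProbabilityMeasure μ := ⟨Measure.haarMeasure_self⟩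
  obtain ⟨v, hv, v_ne⟩ := M.toSubmodule.ne_bot_iff.1 hM₀
  let A := orbitAverage μ ρ v
  have A_compact : IsCompactOperator A := hρ.isCompactOperator_orbitAverage v
  obtain ⟨c, hc, c_ne⟩ : ∃ c, End.HasEigenvalue (A : End ℂ H) c ∧ c ≠ 0 := by
    by_contra! h
    exact hρ.orbitAverage_ne_zero v_ne
      ((ContinuousLinearMap.eq_zero_of_forall_hasEigenvalue_eq_zero A_compact
        (hρ.isSymmetric_orbitAverage v)).1 h)
  have mem_iff (w : H) : w ∈ End.eigenspace (A : End ℂ H) c ↔ A w = c • w :=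
    End.mem_eigenspace_iff
  let E : Subrepresentation ρ :=
    { toSubmodule := End.eigenspace (A : End ℂ H) c
      apply_mem_toSubmodule := fun g w hw ↦ by
        rw [mem_iff] at hw ⊢
        rw [hρ.orbitAverage_map v g w, hw, map_smul] }
  refine ⟨E, fun w hw ↦ ?_, fun h ↦ hc (congrArg Subrepresentation.toSubmodule h),
    ContinuousLinearMap.finite_dimensional_eigenspace A_compact c c_ne⟩
  have w_eq : w = c⁻¹ • A w := by rw [(mem_iff w).1 hw, inv_smul_smul₀ c_ne]
  rw [w_eq]
  exact M.toSubmodule.smul_mem _ (hρ.orbitAverage_apply_mem hM hv w)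

theorem topologicalClosure_iSup_irreducible_eq_top (hρ : IsContinuousUnitary ρ) :
    (⨆ σ : {σ : Subrepresentation ρ //
      FiniteDimensional ℂ σ.toSubmodule ∧ σ.toRepresentation.IsIrreducible},
        σ.1.toSubmodule).topologicalClosure = ⊤ := by
  set S := ⨆ σ : {σ : Subrepresentation ρ //
    FiniteDimensional ℂ σ.toSubmodule ∧ σ.toRepresentation.IsIrreducible}, σ.1.toSubmodule with hS
  rw [Submodule.topologicalClosure_eq_top_iff]
  by_contra orthogonal_ne
  let M : Subrepresentation ρ :=
    { toSubmodule := Sᗮ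
      apply_mem_toSubmodule := fun g v hv ↦ by
        rw [hS, ← Submodule.iInf_orthogonal, Submodule.mem_iInf] at hv ⊢
        exact fun σ ↦ hρ.map_mem_orthogonal σ.1 g (hv σ) }
  obtain ⟨E, E_le, E_ne, _⟩ :=
    hρ.exists_finiteDimensional_le (M := M) S.isClosed_orthogonal orthogonal_ne
  obtain ⟨σ, σ_le, σ_atom⟩ := exists_isAtom_le_of_finiteDimensional E_ne
  have σ_le_S : σ.toSubmodule ≤ S :=
    le_iSup_of_le ⟨σ, Submodule.finiteDimensional_of_le σ_le,
      isIrreducible_toRepresentation_of_isAtom σ_atom⟩ le_rfl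
  have σ_le_orthogonal : σ.toSubmodule ≤ Sᗮ := σ_le.trans E_le
  exact σ_atom.1 (Subrepresentation.toSubmodule_injective
    (le_bot_iff.1 (S.orthogonal_disjoint σ_le_S σ_le_orthogonal)))

theorem eq_one_of_forall_irreducible (hρ : IsContinuousUnitary ρ) {g : G}
    (hg : ∀ σ : Subrepresentation ρ, FiniteDimensional ℂ σ.toSubmodule →
      σ.toRepresentation.IsIrreducible → σ.toRepresentation g = 1) : ρ g = 1 := by
  have isClosed_fixed : IsClosed ((LinearMap.eqLocus (ρ g) 1 : Submodule ℂ H) : Set H) :=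
    isClosed_eq (hρ.continuous_map g) continuous_id
  rw [← LinearMap.eqLocus_eq_top, eq_top_iff, ← hρ.topologicalClosure_iSup_irreducible_eq_top]
  refine Submodule.topologicalClosure_minimal _ (iSup_le ?_) isClosed_fixed
  rintro ⟨σ, hfin, hirr⟩ v hv
  exact congrArg Subtype.val (LinearMap.congr_fun (hg σ hfin hirr) ⟨v, hv⟩)

end PeterWeyl

end IsContinuousUnitary

section LeftRegular

variable {G : Type*} [Group G] [TopologicalSpace G] [IsTopologicalGroup G]
  [MeasurableSpace G] [BorelSpace G]

/-- The left regular representation `(g • f) x = f (g⁻¹ * x)` of `G` on `L²(G, μ)`, written through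
the right action of `G` on functions by translation of the argument. -/
noncomputable def leftRegular (μ : Measure G) [μ.IsMulLeftInvariant] :
    Representation ℂ G (Lp ℂ 2 μ) where
  toFun g := DistribSMul.toLinearMap ℂ (Lp ℂ 2 μ) (DomMulAct.mk g⁻¹)
  map_one' := by ext1 f; simp
  map_mul' g h := by ext1 f; simp [mul_smul]

theorem leftRegular_toLp [CompactSpace G] (μ : Measure G) [μ.IsMulLeftInvariant]
    [IsFiniteMeasure μ] (g : G) (f : C(G, ℂ)) :
    leftRegular μ g (ContinuousMap.toLp 2 μ ℂ f) =
      ContinuousMap.toLp 2 μ ℂ (f.comp ⟨(g⁻¹ * ·), continuous_const_mul g⁻¹⟩) :=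
  rfl

theorem isContinuousUnitary_leftRegular (μ : Measure G) [μ.IsMulLeftInvariant]
    [IsLocallyFiniteMeasure μ] [μ.InnerRegularCompactLTTop] :
    IsContinuousUnitary (leftRegular μ) where
  norm_map g f := DomMulAct.norm_smul_Lp _ f
  continuous_apply f := by
    have : Fact ((2 : ENNReal) ≠ ⊤) := ⟨ENNReal.ofNat_ne_top⟩
    exact (DomMulAct.continuous_mk.comp continuous_inv).smul continuous_const

theorem leftRegular_injective [CompactSpace G] [T2Space G] (μ : Measure G) [μ.IsMulLeftInvariant]
    [IsFiniteMeasure μ] [μ.IsOpenPosMeasure] : Function.Injective (leftRegular μ) := by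
  refine (injective_iff_map_eq_one _).2 fun g hg ↦ by_contra fun g_ne ↦ ?_
  obtain ⟨f, f_zero, f_one, -⟩ := exists_continuous_zero_one_of_isClosed
    (isClosed_singleton (x := g⁻¹)) (isClosed_singleton (x := (1 : G))) (by simpa using g_ne)
  let F : C(G, ℂ) := ⟨fun x ↦ f x, by fun_prop⟩
  have translate_eq : F.comp ⟨(g⁻¹ * ·), continuous_const_mul g⁻¹⟩ = F := by
    apply ContinuousMap.toLp_injective (𝕜 := ℂ) (p := 2) μ
    rw [← leftRegular_toLp, hg, Module.End.one_apply]
  have f_eq : f g⁻¹ = f 1 := by simpa [F] using DFunLike.congr_fun translate_eq 1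
  rw [f_zero rfl, f_one rfl] at f_eq
  exact zero_ne_one f_eq

end LeftRegular

theorem isClosed_center {G : Type*} [Group G] [TopologicalSpace G] [IsTopologicalGroup G]
    [T2Space G] : IsClosed (Subgroup.center G : Set G) := by
  rw [← Subgroup.centralizer_univ]
  exact Set.isClosed_centralizer _

theorem statement4_general (K : Type*) [Group K] [TopologicalSpace K] [IsTopologicalGroup K]
    [CompactSpace K] [T2Space K] :
    TotallyDisconnectedSpace ↥(Subgroup.center K ⊓ (commutator K).topologicalClosure) ∧
      CompactSpace ↥(Subgroup.center K ⊓ (commutator K).topologicalClosure) ∧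
        T2Space ↥(Subgroup.center K ⊓ (commutator K).topologicalClosure) := by
  refine ⟨?_, ?_, inferInstance⟩
  · borelize K
    let μ : Measure K := .haarMeasure ⊤
    have hμ := isContinuousUnitary_leftRegular μ
    rw [totallyDisconnectedSpace_iff_connectedComponent_one]
    refine (Set.subset_singleton_iff.2 fun z hz ↦ Subtype.ext ?_).antisymm
      (Set.singleton_subset_iff.2 mem_connectedComponent)
    have acts_trivially : leftRegular μ z = 1 := hμ.eq_one_of_forall_irreducible fun σ _ _ ↦
      eq_one_of_mem_connectedComponent_center_inf (ρ := σ.toRepresentation)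
        (fun v ↦ (hμ.continuous_apply v).subtype_mk _) hz
    exact leftRegular_injective μ (acts_trivially.trans (map_one _).symm)
  · exact isCompact_iff_compactSpace.1
      (isClosed_center.inter (commutator K).isClosed_topologicalClosure).isCompact

/-- If `K` is a compact Hausdorff topological group which equals the closure of its own
commutator subgroup, then its center is totally disconnected; being compact (and Hausdorff),
it is therefore a profinite group. -/
theorem statement4 (K : Type*) [Group K] [TopologicalSpace K] [IsTopologicalGroup K]
    [CompactSpace K] [T2Space K]
    (hK : (commutator K).topologicalClosure = ⊤) :
    TotallyDisconnectedSpace ↥(Subgroup.center K) ∧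
      CompactSpace ↥(Subgroup.center K) ∧ T2Space ↥(Subgroup.center K) := by
  have h := statement4_general K
  rwa [hK, inf_top_eq] at h
end

section
/- Let G and G' be locally compact Hausdorff topological groups, and let ι : G → G' be a continuous group homomorphism whose image ι(G) is a normal subgroup of G'. Let K ⊆ G and K' ⊆ G' be compact open subgroups with ι⁻¹(K') = K. Equip G and G' with left Haar measures μ and μ' normalized so that μ(K) = 1 and μ'(K') = 1. Then for every locally constant, compactly supported function ψ : G' → ℂ which is right K'-invariant (ψ(x k') = ψ(x) for all x ∈ G', k' ∈ K') and which vanishes outside the open subgroup ι(G)·K', one has ∫_{G'} ψ(g) dμ'(g) = ∫_{G} ψ(ι(h)) dμ(h). -/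
open MeasureTheory
open scoped Pointwise

/-!
Since `μ'` is left invariant and every coset of `K'` has mass one, its image on the discrete space
`G' ⧸ K'` is the counting measure; likewise for `μ` on `G ⧸ ι⁻¹(K')`. The homomorphism `ι` induces
an injection `G ⧸ ι⁻¹(K') → G' ⧸ K'` whose range consists of the cosets contained in `ι(G)·K'`.
A right `K'`-invariant function vanishing outside `ι(G)·K'` is a function on `G' ⧸ K'` supported on
this range, so both integrals are the same sum over cosets.
-/

section CountingMeasure

variable {α β E : Type*} [MeasurableSpace α] [MeasurableSpace β]

lemma eq_count_of_measure_singleton_eq_one [MeasurableSingletonClass α] {μ : Measure α}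
    (hμ : ∀ a, μ {a} = 1) : μ = Measure.count := by
  have measure_finset (t : Finset α) : μ t = Measure.count (t : Set α) := by
    simp only [← sum_measure_singleton, hμ, Measure.count_singleton]
  ext s -
  rcases s.finite_or_infinite with hs | hs
  · simpa only [hs.coe_toFinset] using measure_finset hs.toFinset
  · rw [Measure.count_apply_infinite hs, eq_top_iff]
    refine le_of_tendsto' ENNReal.tendsto_nat_nhds_top fun n ↦ ?_
    obtain ⟨t, hts, rfl⟩ := hs.exists_subset_card_eq n
    calc (t.card : ENNReal) = μ t := by rw [measure_finset, Measure.count_apply_finset]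
      _ ≤ μ s := measure_mono hts

variable [DiscreteMeasurableSpace α] {j : α → β}

lemma map_count_of_injective [MeasurableSingletonClass β] (hj : j.Injective) :
    Measure.count.map j = Measure.count.restrict (Set.range j) := by
  ext s hs
  rw [Measure.map_apply .of_discrete hs, Measure.restrict_apply hs,
    ← Set.image_preimage_eq_inter_range, Measure.count_injective_image hj]

variable [DiscreteMeasurableSpace β]

lemma measurableEmbedding_of_injective (hj : j.Injective) : MeasurableEmbedding j where
  injective := hj
  measurable := .of_discrete
  measurableSet_image' _ _ := .of_discrete

variable [NormedAddCommGroup E] {f : β → E}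

lemma integrable_count_comp_iff_of_injective (hj : j.Injective) (hf : ∀ b ∉ Set.range j, f b = 0) :
    Integrable (f ∘ j) Measure.count ↔ Integrable f Measure.count := by
  rw [← (measurableEmbedding_of_injective hj).integrable_map_iff, map_count_of_injective hj]
  exact integrableOn_iff_integrable_of_support_subset (Function.support_subset_iff'.2 hf)

lemma integral_count_comp_of_injective [NormedSpace ℝ E] (hj : j.Injective)
    (hf : ∀ b ∉ Set.range j, f b = 0) :
    ∫ a, f (j a) ∂Measure.count = ∫ b, f b ∂Measure.count := by
  rw [← (measurableEmbedding_of_injective hj).integral_map, map_count_of_injective hj]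
  exact setIntegral_eq_integral_of_forall_compl_eq_zero hf

end CountingMeasure

section Quotient

variable {G E : Type*} [Group G] {K : Subgroup G}

lemma exists_eq_comp_mk_of_mul_right_invariant {ψ : G → E}
    (hψ : ∀ x, ∀ k ∈ K, ψ (x * k) = ψ x) : ∃ f : G ⧸ K → E, ψ = fun g : G ↦ f g :=
  ⟨Quotient.lift ψ fun x y hxy ↦ by
    simpa using (hψ x _ (QuotientGroup.leftRel_apply.1 hxy)).symm, rfl⟩

variable [MeasurableSpace G]

lemma discreteMeasurableSpace_quotient_of_isOpen [TopologicalSpace G] [SeparatelyContinuousMul G]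
    [OpensMeasurableSpace G] (hK : IsOpen (K : Set G)) : DiscreteMeasurableSpace (G ⧸ K) where
  forall_measurableSet s := by
    have := QuotientGroup.discreteTopology hK
    exact ((isOpen_discrete s).preimage QuotientGroup.continuous_mk).measurableSet

variable [MeasurableMul G] [DiscreteMeasurableSpace (G ⧸ K)] {μ : Measure G}
  [μ.IsMulLeftInvariant]

lemma map_mk_eq_count (hμK : μ K = 1) :
    μ.map (QuotientGroup.mk : G → G ⧸ K) = Measure.count := by
  refine eq_count_of_measure_singleton_eq_one fun q ↦ ?_
  obtain ⟨x, rfl⟩ := QuotientGroup.mk_surjective q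
  have fiber_eq : (QuotientGroup.mk : G → G ⧸ K) ⁻¹' {(x : G ⧸ K)} = (x⁻¹ * ·) ⁻¹' (K : Set G) := by
    ext g
    exact eq_comm.trans QuotientGroup.eq
  rw [Measure.map_apply QuotientGroup.measurable_coe .of_discrete, fiber_eq,
    measure_preimage_mul, hμK]

variable [NormedAddCommGroup E] [SecondCountableTopology E] (f : G ⧸ K → E)

lemma integrable_comp_mk_iff_integrable_count (hμK : μ K = 1) :
    Integrable (fun g : G ↦ f g) μ ↔ Integrable f Measure.count := by
  borelize E
  rw [← map_mk_eq_count hμK]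
  exact (integrable_map_measure Measurable.of_discrete.aestronglyMeasurable
    QuotientGroup.measurable_coe.aemeasurable).symm

lemma integral_comp_mk_eq_integral_count [NormedSpace ℝ E] (hμK : μ K = 1) :
    ∫ g : G, f g ∂μ = ∫ q, f q ∂Measure.count := by
  borelize E
  rw [← map_mk_eq_count hμK]
  exact (integral_map QuotientGroup.measurable_coe.aemeasurable
    Measurable.of_discrete.aestronglyMeasurable).symm

end Quotient

section ComapQuotient

variable {G G' : Type*} [Group G] [Group G'] (ι : G →* G') (K' : Subgroup G')

/-- The map on left coset spaces `G ⧸ ι⁻¹(K') → G' ⧸ K'` induced by a homomorphism `ι`. As `K'` need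
not be normal, `QuotientGroup.map` does not apply. -/
def comapQuotientMap : G ⧸ K'.comap ι → G' ⧸ K' :=
  Quotient.map' ι fun x y hxy ↦ by
    simpa [QuotientGroup.leftRel_apply] using hxy

lemma comapQuotientMap_injective : (comapQuotientMap ι K').Injective := by
  rintro ⟨x⟩ ⟨y⟩ hxy
  have : (ι x)⁻¹ * ι y ∈ K' := QuotientGroup.eq.1 hxy
  exact QuotientGroup.eq.2 (by simpa using this)

lemma mk_mem_range_comapQuotientMap_iff {x : G'} :
    (x : G' ⧸ K') ∈ Set.range (comapQuotientMap ι K') ↔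
      x ∈ (ι.range : Set G') * (K' : Set G') := by
  rw [← QuotientGroup.mk_surjective.range_comp]
  constructor
  · rintro ⟨h, hx⟩
    exact ⟨ι h, ⟨h, rfl⟩, (ι h)⁻¹ * x, QuotientGroup.eq.1 hx, mul_inv_cancel_left _ _⟩
  · rintro ⟨_, ⟨h, rfl⟩, k, hk, rfl⟩
    exact ⟨h, (QuotientGroup.mk_mul_of_mem (ι h) hk).symm⟩

end ComapQuotient

theorem statement5_general {G G' E : Type*}
    [Group G] [TopologicalSpace G] [ContinuousMul G] [MeasurableSpace G] [BorelSpace G]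
    [Group G'] [TopologicalSpace G'] [ContinuousMul G'] [MeasurableSpace G'] [BorelSpace G']
    [NormedAddCommGroup E] [NormedSpace ℝ E] [SecondCountableTopology E]
    (ι : G →* G') (K' : Subgroup G')
    (hKopen : IsOpen (K'.comap ι : Set G)) (hK'open : IsOpen (K' : Set G'))
    (μ : Measure G) (μ' : Measure G') [μ.IsMulLeftInvariant] [μ'.IsMulLeftInvariant]
    (hμK : μ (K'.comap ι : Set G) = 1) (hμ'K' : μ' (K' : Set G') = 1)
    (ψ : G' → E) (hψinv : ∀ x : G', ∀ k ∈ K', ψ (x * k) = ψ x)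
    (hψvanish : ∀ x : G', x ∉ (ι.range : Set G') * (K' : Set G') → ψ x = 0) :
    (Integrable ψ μ' ↔ Integrable (fun h ↦ ψ (ι h)) μ) ∧
      ∫ g, ψ g ∂μ' = ∫ h, ψ (ι h) ∂μ := by
  have := discreteMeasurableSpace_quotient_of_isOpen hKopen
  have := discreteMeasurableSpace_quotient_of_isOpen hK'open
  obtain ⟨f, rfl⟩ := exists_eq_comp_mk_of_mul_right_invariant hψinv
  have hj := comapQuotientMap_injective ι K'
  have hf : ∀ q ∉ Set.range (comapQuotientMap ι K'), f q = 0 := by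
    rintro ⟨x⟩ hx
    exact hψvanish x ((mk_mem_range_comapQuotientMap_iff ι K').not.1 hx)
  constructor
  · calc Integrable (fun g : G' ↦ f g) μ'
      _ ↔ Integrable f Measure.count := integrable_comp_mk_iff_integrable_count f hμ'K'
      _ ↔ Integrable (f ∘ comapQuotientMap ι K') Measure.count :=
        (integrable_count_comp_iff_of_injective hj hf).symm
      _ ↔ Integrable (fun h : G ↦ f (ι h)) μ := (integrable_comp_mk_iff_integrable_count _ hμK).symm
  · calc ∫ g : G', f g ∂μ'
      _ = ∫ q, f q ∂Measure.count := integral_comp_mk_eq_integral_count f hμ'K'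
      _ = ∫ p, f (comapQuotientMap ι K' p) ∂Measure.count :=
        (integral_count_comp_of_injective hj hf).symm
      _ = ∫ h : G, f (ι h) ∂μ := (integral_comp_mk_eq_integral_count _ hμK).symm

/-- Let `ι : G → G'` be a continuous homomorphism of locally compact Hausdorff topological
groups with normal image, `K ⊆ G` and `K' ⊆ G'` compact open subgroups with `ι⁻¹(K') = K`,
and let `μ`, `μ'` be left Haar measures normalized by `μ(K) = 1`, `μ'(K') = 1`. Then for every
locally constant, compactly supported, right `K'`-invariant function `ψ : G' → ℂ` vanishing
outside `ι(G)·K'`, one has `∫_{G'} ψ dμ' = ∫_{G} (ψ ∘ ι) dμ`. -/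
theorem statement5 {G G' : Type*}
    [Group G] [TopologicalSpace G] [IsTopologicalGroup G] [LocallyCompactSpace G] [T2Space G]
    [MeasurableSpace G] [BorelSpace G]
    [Group G'] [TopologicalSpace G'] [IsTopologicalGroup G'] [LocallyCompactSpace G'] [T2Space G']
    [MeasurableSpace G'] [BorelSpace G']
    (ι : G →* G') (hcont : Continuous ⇑ι) (hnormal : ι.range.Normal)
    (K : Subgroup G) (K' : Subgroup G')
    (hKcompact : IsCompact (K : Set G)) (hKopen : IsOpen (K : Set G))
    (hK'compact : IsCompact (K' : Set G')) (hK'open : IsOpen (K' : Set G'))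
    (hpre : K'.comap ι = K)
    (μ : Measure G) (μ' : Measure G')
    [μ.IsHaarMeasure] [μ'.IsHaarMeasure] [μ.Regular] [μ'.Regular]
    (hμK : μ (K : Set G) = 1) (hμ'K' : μ' (K' : Set G') = 1)
    (ψ : G' → ℂ) (hψloc : IsLocallyConstant ψ) (hψsupp : HasCompactSupport ψ)
    (hψinv : ∀ x : G', ∀ k ∈ K', ψ (x * k) = ψ x)
    (hψvanish : ∀ x : G', x ∉ (ι.range : Set G') * (K' : Set G') → ψ x = 0) :
    ∫ g, ψ g ∂μ' = ∫ h, ψ (ι h) ∂μ := by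
  subst hpre
  exact (statement5_general ι K' hKopen hK'open μ μ' hμK hμ'K' ψ hψinv hψvanish).2
end

section
/- Let n ≥ 1 and let M be a symmetric n × n matrix with integer entries all of whose diagonal entries are even. If det M = 1 or det M = −1, then n is even. If det M = 2 or det M = −2, then n is odd. -/
/-!
Modulo `2` the matrix `M` is alternating, so its rank `r` over `𝔽₂` is even. If `det M` is odd, then
`r = n`. If `det M = ±2`, then `r < n`, while `2 ^ (n - r)` divides `det M`, so `r = n - 1`.

The rank of an alternating form is even because the form is nondegenerate on a complement of its
radical, and an alternating matrix of odd size has determinant zero. The latter is immediate from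
`det A = det Aᵀ = det (-A) = -det A` if `2` is not a zero divisor, and an alternating matrix over
any commutative ring lifts to one over a polynomial ring with integer coefficients.
-/

open Matrix Module

section AlternatingMatrix

variable {ι R : Type*}

/-- The Gram matrices of alternating bilinear forms: skew-symmetric matrices with zero diagonal. The
second condition is not a consequence of the first in characteristic two. -/
structure IsAlternatingMatrix [AddGroup R] (A : Matrix ι ι R) : Prop where
  transpose_eq_neg : Aᵀ = -A
  diag_eq_zero : ∀ i, A i i = 0

theorem IsAlternatingMatrix.exists_eq_sub_transpose [AddGroup R] {A : Matrix ι ι R}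
    (hA : IsAlternatingMatrix A) : ∃ U : Matrix ι ι R, A = U - Uᵀ := by
  classical
  let _ : LinearOrder ι := IsWellOrder.linearOrder WellOrderingRel
  refine ⟨of fun i j ↦ if i < j then A i j else 0, ext fun i j ↦ ?_⟩
  simp only [Matrix.sub_apply, transpose_apply, of_apply]
  rcases lt_trichotomy i j with hij | rfl | hji
  · simp [hij, hij.not_gt]
  · simp [hA.diag_eq_zero]
  · simpa [hji, hji.not_gt] using congr_fun₂ hA.transpose_eq_neg j i

theorem isAlternatingMatrix_map_of_charTwo {S : Type*} [Ring R] [Ring S] [CharP S 2]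
    {M : Matrix ι ι R} (hsym : M.IsSymm) (hdiag : ∀ i, Even (M i i)) (f : R →+* S) :
    IsAlternatingMatrix (M.map f) where
  transpose_eq_neg := by
    ext i j
    simp [hsym.apply, CharTwo.neg_eq]
  diag_eq_zero i := by
    obtain ⟨a, ha⟩ := hdiag i
    rw [map_apply, ha, map_add, CharTwo.add_self_eq_zero]

variable [Fintype ι] [DecidableEq ι] [CommRing R] {A : Matrix ι ι R}

theorem two_mul_det_eq_zero_of_transpose_eq_neg (hA : Aᵀ = -A) (hcard : Odd (Fintype.card ι)) :
    2 * A.det = 0 := by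
  have hdet : A.det = -A.det :=
    calc A.det = (-A).det := by rw [← hA, det_transpose]
      _ = -A.det := by rw [det_neg, hcard.neg_one_pow, neg_one_mul]
  linear_combination hdet

theorem IsAlternatingMatrix.det_eq_zero_of_odd_card (hA : IsAlternatingMatrix A)
    (hcard : Odd (Fintype.card ι)) : A.det = 0 := by
  obtain ⟨U, rfl⟩ := hA.exists_eq_sub_transpose
  let f : MvPolynomial R ℤ →+* R := (MvPolynomial.aeval id).toRingHom
  let V : Matrix ι ι (MvPolynomial R ℤ) := U.map MvPolynomial.X
  have hV : (V - Vᵀ).det = 0 := by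
    simpa using two_mul_det_eq_zero_of_transpose_eq_neg (A := V - Vᵀ) (by simp) hcard
  have hVU : f.mapMatrix (V - Vᵀ) = U - Uᵀ := by
    ext i j
    simp [f, V]
  rw [← hVU, ← RingHom.map_det, hV, map_zero]

theorem IsAlternatingMatrix.isAlt_toBilin' (hA : IsAlternatingMatrix A) : A.toBilin'.IsAlt := by
  obtain ⟨U, rfl⟩ := hA.exists_eq_sub_transpose
  intro x
  rw [toBilin'_apply', sub_mulVec, dotProduct_sub, mulVec_transpose, dotProduct_comm x (x ᵥ* U),
    dotProduct_mulVec, sub_self]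

theorem isAlternatingMatrix_toMatrix_of_isAlt {V : Type*} [AddCommGroup V] [Module R V]
    {B : LinearMap.BilinForm R V} (hB : B.IsAlt) (b : Basis ι R V) :
    IsAlternatingMatrix (LinearMap.BilinForm.toMatrix b B) where
  transpose_eq_neg := by
    ext i j
    simpa [LinearMap.BilinForm.toMatrix_apply] using (hB.neg_eq (b i) (b j)).symm
  diag_eq_zero i := by rw [LinearMap.BilinForm.toMatrix_apply, hB.self_eq_zero]

end AlternatingMatrix

section EvenRank

theorem nondegenerate_restrict_of_isRefl_of_isCompl_ker {R V : Type*} [CommRing R]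
    [AddCommGroup V] [Module R V] {B : LinearMap.BilinForm R V} (hB : B.IsRefl)
    {W : Submodule R V} (hW : IsCompl W (LinearMap.ker B)) : (B.restrict W).Nondegenerate := by
  have hrefl : (B.restrict W).IsRefl := fun x y ↦ hB x y
  have hortho : ∀ x ∈ W, ∀ y ∈ LinearMap.ker B, B x y = 0 := fun x _ y hy ↦
    hB y x (by rw [LinearMap.mem_ker.mp hy, LinearMap.zero_apply])
  refine (LinearMap.IsRefl.nondegenerate_iff_separatingLeft hrefl).mpr ?_
  rw [LinearMap.separatingLeft_iff_ker_eq_bot,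
    LinearMap.BilinForm.ker_restrict_eq_of_codisjoint hW.codisjoint hortho]
  exact Submodule.disjoint_iff_comap_eq_bot.mp hW.disjoint

variable {ι K V : Type*} [Field K] [AddCommGroup V] [Module K V] [FiniteDimensional K V]
  {B : LinearMap.BilinForm K V}

theorem even_finrank_of_isAlt_of_nondegenerate (hB : B.IsAlt) (hnd : B.Nondegenerate) :
    Even (finrank K V) := by
  by_contra hodd
  let b := finBasis K V
  have hdet : (LinearMap.BilinForm.toMatrix b B).det = 0 :=
    (isAlternatingMatrix_toMatrix_of_isAlt hB b).det_eq_zero_of_odd_card (by simpa using hodd)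
  exact (LinearMap.BilinForm.nondegenerate_iff_det_ne_zero b).mp hnd hdet

theorem even_finrank_range_of_isAlt (hB : B.IsAlt) : Even (finrank K (LinearMap.range B)) := by
  obtain ⟨W, hW⟩ := (LinearMap.ker B).exists_isCompl
  rw [← (B.kerComplementEquivRange hW.symm).finrank_eq]
  exact even_finrank_of_isAlt_of_nondegenerate (fun x ↦ hB x)
    (nondegenerate_restrict_of_isRefl_of_isCompl_ker hB.isRefl hW.symm)

variable [Fintype ι] {A : Matrix ι ι K}

theorem finrank_range_toBilin' [DecidableEq ι] (A : Matrix ι ι K) :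
    finrank K (LinearMap.range A.toBilin') = A.rank := by
  have hcomp : A.toBilin' = (dotProductEquiv K ι).toLinearMap ∘ₗ Aᵀ.mulVecLin := by
    ext i j
    simp
  rw [hcomp, LinearMap.range_comp, LinearEquiv.finrank_map_eq, ← rank_transpose, Matrix.rank]

theorem IsAlternatingMatrix.even_rank (hA : IsAlternatingMatrix A) : Even A.rank := by
  classical
  rw [← finrank_range_toBilin']
  exact even_finrank_range_of_isAlt hA.isAlt_toBilin'

theorem rank_lt_card_of_det_eq_zero [DecidableEq ι] (hA : A.det = 0) :
    A.rank < Fintype.card ι := by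
  obtain ⟨v, hv, hAv⟩ := exists_mulVec_eq_zero_iff.mpr hA
  have hker : LinearMap.ker A.mulVecLin ≠ ⊥ := fun h ↦ hv (LinearMap.ker_eq_bot'.mp h v hAv)
  have hpos : 1 ≤ finrank K (LinearMap.ker A.mulVecLin) := Submodule.one_le_finrank_iff.mpr hker
  have hsum : A.rank + finrank K (LinearMap.ker A.mulVecLin) = Fintype.card ι := by
    rw [Matrix.rank, LinearMap.finrank_range_add_finrank_ker, finrank_pi]
  omega

end EvenRank

section CorankDivisibility

theorem exists_matrix_map_eq_of_surjective {m n α β : Type*} {f : α → β}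
    (hf : Function.Surjective f) (A : Matrix m n β) : ∃ M : Matrix m n α, M.map f = A :=
  ⟨A.map (Function.surjInv hf), by ext; simp [Function.surjInv_eq hf]⟩

theorem map_eq_zero_iff_dvd_of_ker_eq_span {R S : Type*} [CommRing R] [Semiring S] {f : R →+* S}
    {p : R} (hp : RingHom.ker f = Ideal.span {p}) {x : R} : f x = 0 ↔ p ∣ x := by
  rw [← RingHom.mem_ker, hp, Ideal.mem_span_singleton]

variable {ι R K : Type*} [CommRing R] [Field K] {f : R →+* K} {p : R}

theorem isCoprime_of_ker_eq_span (hf : Function.Surjective f)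
    (hp : RingHom.ker f = Ideal.span {p}) {x : R} (hx : f x ≠ 0) : IsCoprime p x := by
  obtain ⟨y, hy⟩ := hf (f x)⁻¹
  have hdvd : p ∣ 1 - y * x := by
    rw [← map_eq_zero_iff_dvd_of_ker_eq_span hp, map_sub, map_mul, hy, inv_mul_cancel₀ hx,
      map_one, sub_self]
  obtain ⟨z, hz⟩ := hdvd
  exact ⟨z, y, by linear_combination -hz⟩

variable [Fintype ι] [DecidableEq ι]

theorem pow_card_dvd_det_of_dvd_rows {M : Matrix ι ι R} (s : Finset ι)
    (hs : ∀ i ∈ s, ∀ j, p ∣ M i j) : p ^ s.card ∣ M.det := by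
  have hrow : ∀ i j, ∃ c, M i j = (if i ∈ s then p else 1) * c := fun i j ↦ by
    split_ifs with hi
    · exact hs i hi j
    · exact ⟨M i j, (one_mul _).symm⟩
  choose N hN using hrow
  have hM : M = diagonal (fun i ↦ if i ∈ s then p else 1) * of N := by
    ext i j
    rw [diagonal_mul, hN, of_apply]
  rw [hM, det_mul, det_diagonal, Finset.prod_ite_mem, Finset.univ_inter, Finset.prod_const]
  exact dvd_mul_right _ _

-- Lifts to `R` of the matrices bringing `M.map f` to rank normal form have determinants coprime
-- to `p`, and they turn `M` into a matrix with `card ι - rank` rows divisible by `p`.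
theorem pow_card_sub_rank_map_dvd_det (hf : Function.Surjective f)
    (hp : RingHom.ker f = Ideal.span {p}) (M : Matrix ι ι R) :
    p ^ (Fintype.card ι - (M.map f).rank) ∣ M.det := by
  obtain ⟨P', Q', e, hP, hQ, hPQ⟩ := (M.map f).exists_rank_normal_form
  obtain ⟨P, rfl⟩ := exists_matrix_map_eq_of_surjective hf P'
  obtain ⟨Q, rfl⟩ := exists_matrix_map_eq_of_surjective hf Q'
  have hcoprime {N : Matrix ι ι R} (hN : IsUnit (N.map f)) : IsCoprime p N.det :=
    isCoprime_of_ker_eq_span hf hp <| by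
      rw [f.map_det]
      exact ((isUnit_iff_isUnit_det _).mp hN).ne_zero
  let s : Finset ι := Finset.univ.map (Function.Embedding.inr.trans e.symm.toEmbedding)
  have hs : ∀ i ∈ s, ∀ j, p ∣ (P * M * Q) i j := by
    intro i hi j
    obtain ⟨k, -, rfl⟩ := Finset.mem_map.mp hi
    have hentry := congr_fun₂ hPQ (e.symm (Sum.inr k)) j
    rw [← Matrix.map_mul, ← Matrix.map_mul, map_apply, submatrix_apply,
      Equiv.apply_symm_apply] at hentry
    refine (map_eq_zero_iff_dvd_of_ker_eq_span hp).mp (hentry.trans ?_)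
    rcases e j with j | j <;> rfl
  have hdvd : p ^ (Fintype.card ι - (M.map f).rank) ∣ P.det * M.det * Q.det := by
    simpa [s] using pow_card_dvd_det_of_dvd_rows s hs
  exact (hcoprime hP).pow_left.dvd_of_dvd_mul_left
    ((hcoprime hQ).pow_left.dvd_of_dvd_mul_right hdvd)

theorem statement6_general (hf : Function.Surjective f) (hp : RingHom.ker f = Ideal.span {p})
    {M : Matrix ι ι R} (hM : IsAlternatingMatrix (M.map f)) :
    (¬ p ∣ M.det → Even (Fintype.card ι)) ∧
      (p ∣ M.det → ¬ p ^ 2 ∣ M.det → Odd (Fintype.card ι)) := by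
  have hdet : (M.map f).det = 0 ↔ p ∣ M.det := by
    rw [← map_eq_zero_iff_dvd_of_ker_eq_span hp, f.map_det, RingHom.mapMatrix_apply]
  constructor
  · intro hndvd
    exact rank_of_det_ne_zero (mt hdet.mp hndvd) ▸ hM.even_rank
  · intro hdvd hsq
    have hlt : (M.map f).rank < Fintype.card ι := rank_lt_card_of_det_eq_zero (hdet.mpr hdvd)
    have hcorank : Fintype.card ι - (M.map f).rank < 2 := by
      by_contra! h
      exact hsq ((pow_dvd_pow p h).trans (pow_card_sub_rank_map_dvd_det hf hp M))
    have hcard : Fintype.card ι = (M.map f).rank + 1 := by omega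
    exact hcard ▸ hM.even_rank.add_one

end CorankDivisibility

/-- Let `M` be a symmetric integral `n × n` matrix with even diagonal entries. If
`det M = ±1` then `n` is even, and if `det M = ±2` then `n` is odd. -/
theorem statement6 (n : ℕ) (hn : 1 ≤ n) (M : Matrix (Fin n) (Fin n) ℤ)
    (hsym : M.IsSymm) (hdiag : ∀ i, Even (M i i)) :
    ((M.det = 1 ∨ M.det = -1) → Even n) ∧ ((M.det = 2 ∨ M.det = -2) → Odd n) := by
  have hparity := statement6_general (ZMod.ringHom_surjective _) (ZMod.ker_intCastRingHom 2)
    (isAlternatingMatrix_map_of_charTwo hsym hdiag (Int.castRingHom (ZMod 2)))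
  rw [Fintype.card_fin] at hparity
  constructor <;> rintro (h | h) <;> simpa [h] using hparity
end

section
/- For every odd positive integer n, the real number (1/12)·( n + 3·sin(nπ/2) + 8·sin(nπ/3)/sin(π/3) ) equals ⌈n/12⌉ if n ≡ 1, 7, or 9 (mod 12), and equals ⌊n/12⌋ if n ≡ 3, 5, or 11 (mod 12). -/
/-!
The fractional part of `n / 12` is `r / 12`, where `r = n % 12`. The two sine terms depend only on
`r`, and for odd `r` their sum is `12 - r` when `r = 1, 7, 9` and `-r` when `r = 3, 5, 11`; this is
precisely the correction that rounds `n / 12` up or down.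
-/

open Real

theorem sin_int_mul_pi_div_eq_of_modEq {d a b : ℤ} (h : a ≡ b [ZMOD 2 * d]) :
    sin (a * π / d) = sin (b * π / d) := by
  obtain ⟨k, hk⟩ := h.symm.dvd
  obtain rfl | hd := eq_or_ne d 0
  · simp
  have hd' : (d : ℝ) ≠ 0 := Int.cast_ne_zero.mpr hd
  have ha : (a : ℝ) = b + 2 * d * k := by exact_mod_cast eq_add_of_sub_eq' hk
  have angle_eq : a * π / d = b * π / d + k * (2 * π) := by
    rw [ha]
    field_simp
  rw [angle_eq, sin_add_int_mul_two_pi]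

section

variable {n : ℤ}

theorem sin_int_mul_pi_div_two_of_emod_four_eq_one (h : n % 4 = 1) : sin (n * π / 2) = 1 := by
  simpa using sin_int_mul_pi_div_eq_of_modEq (d := 2) (b := 1) h

theorem sin_int_mul_pi_div_two_of_emod_four_eq_three (h : n % 4 = 3) :
    sin (n * π / 2) = -1 := by
  have hmod : n ≡ -1 [ZMOD 2 * 2] := h
  simpa [neg_div] using sin_int_mul_pi_div_eq_of_modEq hmod

theorem sin_int_mul_pi_div_three_of_emod_six_eq_one (h : n % 6 = 1) :
    sin (n * π / 3) = sin (π / 3) := by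
  simpa using sin_int_mul_pi_div_eq_of_modEq (d := 3) (b := 1) h

theorem sin_int_mul_pi_div_three_of_three_dvd (h : 3 ∣ n) : sin (n * π / 3) = 0 := by
  obtain ⟨k, rfl⟩ := h
  have angle_eq : ((3 * k : ℤ) : ℝ) * π / 3 = k * π := by
    push_cast
    ring
  rw [angle_eq, sin_int_mul_pi]

theorem sin_int_mul_pi_div_three_of_emod_six_eq_five (h : n % 6 = 5) :
    sin (n * π / 3) = -sin (π / 3) := by
  have hmod : n ≡ -1 [ZMOD 2 * 3] := h
  simpa [neg_div] using sin_int_mul_pi_div_eq_of_modEq hmod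

end

/-- The sum of the character of the `n`-dimensional irreducible representation of `SO(3)` over the
nontrivial rotations of a regular tetrahedron: three half-turns and eight rotations by `2π/3`. A
rotation by `θ` contributes `sin (n * θ / 2) / sin (θ / 2)`, whose denominator is `1` for the
half-turns. The formula is taken for every integer `n`, though only odd positive `n` are dimensions
of irreducible representations. -/
noncomputable def nontrivialRotationSum (n : ℤ) : ℝ :=
  3 * sin (n * π / 2) + 8 * sin (n * π / 3) / sin (π / 3)

namespace nontrivialRotationSum

variable {n : ℤ}

theorem eq_twelve_sub_emod (h : n % 12 = 1 ∨ n % 12 = 7 ∨ n % 12 = 9) :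
    nontrivialRotationSum n = 12 - (n % 12 : ℤ) := by
  unfold nontrivialRotationSum
  rcases h with h | h | h
  · rw [sin_int_mul_pi_div_two_of_emod_four_eq_one (by lia),
      sin_int_mul_pi_div_three_of_emod_six_eq_one (by lia), h]
    norm_num
  · rw [sin_int_mul_pi_div_two_of_emod_four_eq_three (by lia),
      sin_int_mul_pi_div_three_of_emod_six_eq_one (by lia), h]
    norm_num
  · rw [sin_int_mul_pi_div_two_of_emod_four_eq_one (by lia),
      sin_int_mul_pi_div_three_of_three_dvd (by lia), h]
    norm_num

theorem eq_neg_emod (h : n % 12 = 3 ∨ n % 12 = 5 ∨ n % 12 = 11) :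
    nontrivialRotationSum n = -(n % 12 : ℤ) := by
  unfold nontrivialRotationSum
  rcases h with h | h | h
  · rw [sin_int_mul_pi_div_two_of_emod_four_eq_three (by lia),
      sin_int_mul_pi_div_three_of_three_dvd (by lia), h]
    norm_num
  · rw [sin_int_mul_pi_div_two_of_emod_four_eq_one (by lia),
      sin_int_mul_pi_div_three_of_emod_six_eq_five (by lia), h]
    norm_num [neg_div]
  · rw [sin_int_mul_pi_div_two_of_emod_four_eq_three (by lia),
      sin_int_mul_pi_div_three_of_emod_six_eq_five (by lia), h]
    norm_num [neg_div]

end nontrivialRotationSum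

theorem statement7_general (n : ℤ) :
    (n % 12 = 1 ∨ n % 12 = 7 ∨ n % 12 = 9 →
      (1 / 12 : ℝ) * (n + 3 * sin (n * π / 2) + 8 * sin (n * π / 3) / sin (π / 3))
        = ⌈(n : ℝ) / 12⌉) ∧
    (n % 12 = 3 ∨ n % 12 = 5 ∨ n % 12 = 11 →
      (1 / 12 : ℝ) * (n + 3 * sin (n * π / 2) + 8 * sin (n * π / 3) / sin (π / 3))
        = ⌊(n : ℝ) / 12⌋) := by
  have fract_eq : Int.fract ((n : ℝ) / 12) = (n % 12 : ℤ) / 12 := by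
    exact_mod_cast Int.fract_div_intCast_eq_div_intCast_mod (k := ℝ) (m := n) (n := 12)
  rw [add_assoc, ← nontrivialRotationSum]
  constructor <;> intro h
  · have fract_ne_zero : Int.fract ((n : ℝ) / 12) ≠ 0 := by
      have emod_ne_zero : n % 12 ≠ 0 := by lia
      rw [fract_eq]
      exact div_ne_zero (Int.cast_ne_zero.mpr emod_ne_zero) (by norm_num)
    rw [Int.ceil_eq_add_one_sub_fract fract_ne_zero, fract_eq,
      nontrivialRotationSum.eq_twelve_sub_emod h]
    ring
  · rw [← Int.self_sub_fract, fract_eq, nontrivialRotationSum.eq_neg_emod h]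
    ring

/-- For every odd positive integer `n`, the real number
`(1/12) (n + 3 sin(nπ/2) + 8 sin(nπ/3)/sin(π/3))` equals `⌈n/12⌉` if
`n ≡ 1, 7, 9 (mod 12)`, and equals `⌊n/12⌋` if `n ≡ 3, 5, 11 (mod 12)`. -/
theorem statement7 (n : ℕ) (hpos : 0 < n) (hodd : Odd n) :
    (n % 12 = 1 ∨ n % 12 = 7 ∨ n % 12 = 9 →
      (1 / 12 : ℝ) * ((n : ℝ) + 3 * Real.sin ((n : ℝ) * Real.pi / 2)
          + 8 * Real.sin ((n : ℝ) * Real.pi / 3) / Real.sin (Real.pi / 3))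
        = ((⌈(n : ℝ) / 12⌉ : ℤ) : ℝ)) ∧
    (n % 12 = 3 ∨ n % 12 = 5 ∨ n % 12 = 11 →
      (1 / 12 : ℝ) * ((n : ℝ) + 3 * Real.sin ((n : ℝ) * Real.pi / 2)
          + 8 * Real.sin ((n : ℝ) * Real.pi / 3) / Real.sin (Real.pi / 3))
        = ((⌊(n : ℝ) / 12⌋ : ℤ) : ℝ)) := by
  constructor <;> intro h
  · simpa only [Int.cast_natCast] using (statement7_general n).1 (by lia)
  · simpa only [Int.cast_natCast] using (statement7_general n).2 (by lia)
end

section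
/- Let A, B ∈ M₇(ℚ) be the matrices A = (1/2)·[[0,1,−1,0,0,1,−1],[0,−1,0,−1,−1,1,0],[0,−1,0,1,1,1,0],[0,1,1,0,0,1,1],[−2,0,0,0,0,0,0],[0,0,1,1,−1,0,−1],[0,0,−1,1,−1,0,1]] and B = [[0,0,0,0,0,−1,0],[0,1,0,0,0,0,0],[0,0,1,0,0,0,0],[0,0,0,0,0,0,1],[0,0,0,0,1,0,0],[1,0,0,0,0,0,0],[0,0,0,−1,0,0,0]]. Then A and B are invertible, the subgroup Γ of GL₇(ℚ) generated by A and B is finite of order 12096, and in ℚ[X] one has ∑_{g ∈ Γ} det(X·I₇ − g) = 12096·(X⁷ − X⁴ + X³ − 1). -/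
open Polynomial

noncomputable section

/-- The first generator (one half of an integral matrix). -/
def matA : Matrix (Fin 7) (Fin 7) ℚ :=
  (1 / 2 : ℚ) •
    !![0, 1, -1, 0, 0, 1, -1;
       0, -1, 0, -1, -1, 1, 0;
       0, -1, 0, 1, 1, 1, 0;
       0, 1, 1, 0, 0, 1, 1;
       -2, 0, 0, 0, 0, 0, 0;
       0, 0, 1, 1, -1, 0, -1;
       0, 0, -1, 1, -1, 0, 1]

/-- The second generator. -/
def matB : Matrix (Fin 7) (Fin 7) ℚ :=
  !![0, 0, 0, 0, 0, -1, 0;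
     0, 1, 0, 0, 0, 0, 0;
     0, 0, 1, 0, 0, 0, 0;
     0, 0, 0, 0, 0, 0, 1;
     0, 0, 0, 0, 1, 0, 0;
     1, 0, 0, 0, 0, 0, 0;
     0, 0, 0, -1, 0, 0, 0]

/-!
`Γ` preserves the dot product and the cross product of pure octonions, so an element of `Γ` fixing
three suitable basis vectors is trivial. It also permutes the `126` minimal vectors of a lattice of
type `E₇`, transitively; the stabilizer of `e₂` permutes the `12` vectors `±eⱼ`, `j ≠ 2`
transitively, and the stabilizer of `e₂` and `e₃`, which also fixes `e₂ × e₃ = e₅`, permutes the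
remaining `8` transitively. Hence `|Γ| = 126 · 12 · 8 = 12096`.

Up to sign, the coefficient of `X⁷⁻ᵏ` of the characteristic polynomial is the sum of the principal
`k × k` minors. Summing the minors with given rows over `Γ` gives a `Γ`-invariant alternating
`k`-form. The diagonal sign matrices in `Γ` kill all invariant `1`-forms and `2`-forms, and show
that an invariant `3`-form is determined by its values on the seven Fano lines; these values are
all equal. The sum of the `3 × 3` minors is therefore obtained by pairing `Γ` with the invariant
form `(u × v) · w`, which contributes `1` for each element. The remaining coefficients follow
because the characteristic polynomial of a matrix in `SO₇` is antipalindromic.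
-/

open Finset Matrix MulAction
open scoped MatrixGroups

section Cross

variable (K : Type*) [CommRing K]

/-- The cross product of pure octonions, in the basis with `eₖ × eₖ₊₁ = eₖ₊₃` (indices mod `7`). -/
def octonionCross : (Fin 7 → K) →ₗ[K] (Fin 7 → K) →ₗ[K] Fin 7 → K :=
  LinearMap.mk₂ K
    (fun u v j ↦ (u (j + 1) * v (j + 3) - u (j + 3) * v (j + 1)) +
      (u (j + 2) * v (j + 6) - u (j + 6) * v (j + 2)) +
      (u (j + 4) * v (j + 5) - u (j + 5) * v (j + 4)))
    (fun u u' v ↦ by ext j; simp [add_mul]; ring)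
    (fun c u v ↦ by ext j; simp; ring)
    (fun u v v' ↦ by ext j; simp [mul_add]; ring)
    (fun c u v ↦ by ext j; simp; ring)

/-- The automorphism group of the octonions over `K`, as the group of special orthogonal
transformations of the pure octonions that preserve the cross product. -/
def octonionAut : Subgroup (GL (Fin 7) K) where
  carrier := {g | (g : Matrix (Fin 7) (Fin 7) K) ∈ specialOrthogonalGroup (Fin 7) K ∧
    ∀ u v, octonionCross K (g • u) (g • v) = g • octonionCross K u v}
  one_mem' := ⟨one_mem _, by simp⟩
  mul_mem' hg hh := ⟨mul_mem hg.1 hh.1, fun u v ↦ by simp only [mul_smul, hg.2, hh.2]⟩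
  inv_mem' {g} hg := by
    refine ⟨?_, fun u v ↦ by rw [eq_inv_smul_iff, ← hg.2, smul_inv_smul, smul_inv_smul]⟩
    have horth := (mem_orthogonalGroup_iff _ _).1 hg.1.1
    rw [Units.inv_eq_of_mul_eq_one_right horth, mem_specialOrthogonalGroup_iff,
      mem_orthogonalGroup_iff', transpose_transpose, det_transpose]
    exact ⟨horth, hg.1.2⟩

variable {K}

/-- The Fano line `{k, k + 1, k + 3}`, ordered so that `eₖ × eₖ₊₁ = eₖ₊₃`. -/
def fanoLine (k : Fin 7) : Fin 3 → Fin 7 := ![k, k + 1, k + 3]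

theorem octonionCross_dotProduct (u v w : Fin 7 → K) :
    octonionCross K u v ⬝ᵥ w = ∑ k, det (Matrix.of fun i ↦ ![u, v, w] i ∘ fanoLine k) := by
  simp [octonionCross, fanoLine, dotProduct, det_fin_three, Fin.sum_univ_seven]
  ring

theorem octonionCross_single (k : Fin 7) :
    octonionCross K (Pi.single k 1) (Pi.single (k + 1) 1) = Pi.single (k + 3) 1 := by
  ext j
  fin_cases k <;> fin_cases j <;> simp [octonionCross]

theorem mem_octonionAut_of_single {g : GL (Fin 7) K} (horth : g.1 * g.1ᵀ = 1) (hdet : g.1.det = 1)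
    (hcross : ∀ i j, octonionCross K (g.1.col i) (g.1.col j) =
      g.1 *ᵥ octonionCross K (Pi.single i 1) (Pi.single j 1)) : g ∈ octonionAut K := by
  refine ⟨mem_specialOrthogonalGroup_iff.2 ⟨(mem_orthogonalGroup_iff _ _).2 horth, hdet⟩,
    fun u v ↦ ?_⟩
  have hbilin : (octonionCross K).compl₁₂ (mulVecLin ↑g) (mulVecLin ↑g) =
      (octonionCross K).compr₂ (mulVecLin ↑g) :=
    LinearMap.ext_basis (Pi.basisFun K _) (Pi.basisFun K _) fun i j ↦ by simpa using hcross i j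
  exact LinearMap.congr_fun₂ hbilin u v

theorem smul_dotProduct_smul_of_mem {g : GL (Fin 7) K} (hg : g ∈ octonionAut K)
    (u v : Fin 7 → K) : (g • u) ⬝ᵥ (g • v) = u ⬝ᵥ v := by
  change (g.1 *ᵥ u) ⬝ᵥ (g.1 *ᵥ v) = u ⬝ᵥ v
  rw [dotProduct_mulVec, vecMul_mulVec, ← dotProduct_mulVec]
  simp [(mem_orthogonalGroup_iff' _ _).1 hg.1.1]

open Fin.CommRing in
theorem eq_one_of_mem_octonionAut {g : GL (Fin 7) K} (hg : g ∈ octonionAut K) {k : Fin 7}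
    (h₀ : g • (Pi.single k 1 : Fin 7 → K) = Pi.single k 1)
    (h₁ : g • (Pi.single (k + 1) 1 : Fin 7 → K) = Pi.single (k + 1) 1)
    (h₂ : g • (Pi.single (k + 2) 1 : Fin 7 → K) = Pi.single (k + 2) 1) : g = 1 := by
  have hfix (n : ℕ) :
      g • (Pi.single (k + (n : Fin 7)) 1 : Fin 7 → K) = Pi.single (k + (n : Fin 7)) 1 := by
    induction n using Nat.strong_induction_on with
    | _ n ih =>
      match n with
      | 0 => simpa using h₀
      | 1 => simpa using h₁
      | 2 => simpa using h₂
      | n + 3 =>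
        have h := hg.2 (Pi.single (k + n) 1) (Pi.single (k + n + 1) 1)
        rw [octonionCross_single, ih n (by omega)] at h
        have := ih (n + 1) (by omega)
        push_cast [← add_assoc] at this ⊢
        rw [this, octonionCross_single] at h
        exact h.symm
  ext i j
  have := congrFun (hfix (j - k).val) i
  simpa [Units.smul_def, one_apply, Pi.single_apply] using this

theorem sum_det_submatrix_fanoLine {g : GL (Fin 7) K} (hg : g ∈ octonionAut K) (l : Fin 7) :
    ∑ k, (g.1.submatrix (fanoLine k) (fanoLine l)).det = 1 := by
  set e : Fin 7 → Fin 7 → K := fun i ↦ Pi.single i 1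
  calc
    _ = ∑ k, det (Matrix.of fun i ↦ ![g • e l, g • e (l + 1), g • e (l + 3)] i ∘ fanoLine k) := by
      refine sum_congr rfl fun k _ ↦ ?_
      rw [← det_transpose]
      congr 1
      ext i j
      fin_cases i <;> simp [-submatrix_cons_row, fanoLine, e, Units.smul_def]
    _ = (g • e (l + 3)) ⬝ᵥ (g • e (l + 3)) := by
      rw [← octonionCross_dotProduct, hg.2, octonionCross_single]
    _ = 1 := by simp [smul_dotProduct_smul_of_mem hg, e]

end Cross

section Minors

variable {n ι K : Type*} [Fintype ι] [DecidableEq ι] [CommRing K]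

theorem charpoly_eq_of_mem_specialOrthogonalGroup {M : Matrix ι ι K}
    (hM : M ∈ specialOrthogonalGroup ι K) :
    M.charpoly = (-1) ^ Fintype.card ι * M.charpoly.reverse := by
  have horth : Mᵀ * M = 1 := (mem_orthogonalGroup_iff' ι K).1 hM.1
  have hdet : M.det = 1 := hM.2
  simpa [inv_eq_left_inv horth, hdet, M.reverse_charpoly] using
    M.charpoly_inv (.of_mul_eq_one_right _ horth)

theorem charpoly_coeff_of_mem_specialOrthogonalGroup [Nontrivial K] {M : Matrix ι ι K}
    (hM : M ∈ specialOrthogonalGroup ι K) {i : ℕ} (hi : i ≤ Fintype.card ι) :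
    M.charpoly.coeff i = (-1) ^ Fintype.card ι * M.charpoly.coeff (Fintype.card ι - i) := by
  conv_lhs => rw [charpoly_eq_of_mem_specialOrthogonalGroup hM]
  rw [← C_1, ← C_neg, ← C_pow, coeff_C_mul, coeff_reverse, charpoly_natDegree_eq_dim,
    revAt_le hi]

theorem det_submatrix_val_image [DecidableEq n] {c : ι → n} (hc : Function.Injective c)
    (M : Matrix n n K) :
    (M.submatrix (Subtype.val : univ.image c → n) Subtype.val).det = (M.submatrix c c).det := by
  let φ : ι ≃ univ.image c := .ofBijective (fun i ↦ ⟨c i, by simp⟩)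
    ⟨fun i j h ↦ hc (Subtype.ext_iff.1 h), fun ⟨x, hx⟩ ↦ by simpa [Subtype.ext_iff] using hx⟩
  exact (det_submatrix_equiv_self φ _).symm

end Minors

theorem sum_alternatingMap_apply {α ι R M N : Type*} [CommSemiring R] [AddCommMonoid M]
    [Module R M] [AddCommMonoid N] [Module R N] (s : Finset α) (F : α → M [⋀^ι]→ₗ[R] N)
    (v : ι → M) : (∑ a ∈ s, F a) v = ∑ a ∈ s, F a v := by
  let evalHom : (M [⋀^ι]→ₗ[R] N) →+ N := ⟨⟨fun f ↦ f v, rfl⟩, fun _ _ ↦ rfl⟩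
  exact map_sum evalHom _ _

theorem exists_perm_eq_comp_of_image_subset {α ι : Type*} [DecidableEq α] [Fintype ι]
    {r c : ι → α} (hr : Function.Injective r) (h : univ.image r ⊆ univ.image c) :
    ∃ τ : Equiv.Perm ι, r = c ∘ τ := by
  have hmem (i : ι) : ∃ j, c j = r i := by
    simpa using h (mem_image_of_mem r (mem_univ i))
  choose τ hτ using hmem
  have hinj : Function.Injective τ := fun i j hij ↦ hr (by rw [← hτ, ← hτ, hij])
  exact ⟨.ofBijective τ (Finite.injective_iff_bijective.1 hinj), funext fun i ↦ (hτ i).symm⟩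

section MinorSum

variable {n ι K : Type*} [Fintype n] [DecidableEq n] [Fintype ι] [DecidableEq ι] [CommRing K]

/-- The alternating form `v ↦ ∑ g ∈ H, det (((g vᵢ) (c j))ᵢⱼ)`, whose values on families of standard
basis vectors are the sums over `H` of the minors with rows `c`. -/
def minorSum (H : Subgroup (GL n K)) [Fintype H] (c : ι → n) : (n → K) [⋀^ι]→ₗ[K] K :=
  ∑ g : H, detRowAlternating.compLinearMap (LinearMap.funLeft K K c ∘ₗ mulVecLin g.1.1)

variable (H : Subgroup (GL n K)) [Fintype H] (c : ι → n)

theorem minorSum_apply (v : ι → n → K) :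
    minorSum H c v = ∑ g : H, det (Matrix.of fun i ↦ (g • v i) ∘ c) := by
  exact sum_alternatingMap_apply ..

theorem minorSum_single (r : ι → n) :
    minorSum H c (fun i ↦ Pi.single (r i) 1) = ∑ g : H, (g.1.1.submatrix c r).det := by
  rw [minorSum_apply]
  refine sum_congr rfl fun g _ ↦ ?_
  rw [← det_transpose]
  congr 1
  ext i j
  simp [Subgroup.smul_def, Units.smul_def]

theorem minorSum_smul {h : GL n K} (hh : h ∈ H) (v : ι → n → K) :
    minorSum H c (h • v) = minorSum H c v := by
  rw [minorSum_apply, minorSum_apply]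
  exact Fintype.sum_equiv (Equiv.mulRight ⟨h, hh⟩) _ _ fun g ↦ by simp [mul_smul]

theorem sum_charpoly_coeff_eq_sum_minorSum {k : ℕ} (hk : k ≤ Fintype.card n) :
    ∑ g : H, g.1.1.charpoly.coeff (Fintype.card n - k) =
      (-1) ^ k * ∑ s ∈ univ.powersetCard k,
        minorSum H (Subtype.val : s → n) fun i ↦ Pi.single i.1 1 := by
  simp_rw [charpoly_coeff_eq_sum_minors _ k hk, ← mul_sum, minorSum_single]
  rw [sum_comm]

end MinorSum

theorem apply_single_eq_zero_of_smul_eq {n ι K : Type*} [Fintype n] [DecidableEq n] [Fintype ι]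
    [CommRing K] [CharZero K] [NoZeroDivisors K] {F : (n → K) [⋀^ι]→ₗ[K] K}
    {g : GL n K} (hF : ∀ v, F (g • v) = F v) {σ : n → K} (hg : g.1 = diagonal σ) {r : ι → n}
    (hσ : ∏ i, σ (r i) = -1) : F (fun i ↦ Pi.single (r i) 1) = 0 := by
  have hsmul : g • (fun i ↦ Pi.single (r i) 1) = fun i ↦ σ (r i) • (Pi.single (r i) 1 : n → K) := by
    ext i j
    simp [Units.smul_def, hg, Pi.single_apply]
  have h := hF fun i ↦ Pi.single (r i) 1
  rw [hsmul, AlternatingMap.map_smul_univ, hσ, neg_one_smul] at h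
  exact self_eq_neg.1 h.symm

section Generators

theorem matA_mul_transpose : matA * matAᵀ = 1 := by decide +kernel

theorem matB_mul_transpose : matB * matBᵀ = 1 := by decide +kernel

/-- `matA` as an element of `GL₇(ℚ)`. -/
def genA : GL (Fin 7) ℚ := ⟨matA, matAᵀ, matA_mul_transpose, mul_eq_one_comm.1 matA_mul_transpose⟩

/-- `matB` as an element of `GL₇(ℚ)`. -/
def genB : GL (Fin 7) ℚ := ⟨matB, matBᵀ, matB_mul_transpose, mul_eq_one_comm.1 matB_mul_transpose⟩

/-- The group `Γ` generated by `A` and `B`. -/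
def gammaGroup : Subgroup (GL (Fin 7) ℚ) := Subgroup.closure {genA, genB}

/-- A signed permutation matrix in `Γ` that sends `e₂` to `-e₂`. -/
def genM : GL (Fin 7) ℚ := genB * genA * genB * genA ^ 2 * genB ^ 3 * genA * genB * genA

theorem genA_mem : genA ∈ gammaGroup := Subgroup.subset_closure (.inl rfl)

theorem genB_mem : genB ∈ gammaGroup := Subgroup.subset_closure (.inr rfl)

theorem genM_mem : genM ∈ gammaGroup := by
  unfold genM
  have := genA_mem
  have := genB_mem
  aesop

theorem coe_genM : (genM : Matrix (Fin 7) (Fin 7) ℚ) =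
    !![ 0, 0, 0, 0, -1, 0, 0;
        0, 0, 0, 0, 0, -1, 0;
        0, 0, -1, 0, 0, 0, 0;
        1, 0, 0, 0, 0, 0, 0;
        0, 0, 0, 1, 0, 0, 0;
        0, 0, 0, 0, 0, 0, 1;
        0, -1, 0, 0, 0, 0, 0] := by
  change matB * matA * matB * matA ^ 2 * matB ^ 3 * matA * matB * matA = _
  decide +kernel

theorem det_matA : matA.det = 1 := by
  rw [matA, det_smul]
  eval_det
  norm_num

theorem det_matB : matB.det = 1 := by
  rw [matB]
  eval_det

theorem genA_mem_octonionAut : genA ∈ octonionAut ℚ :=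
  mem_octonionAut_of_single matA_mul_transpose det_matA (by decide +kernel)

theorem genB_mem_octonionAut : genB ∈ octonionAut ℚ :=
  mem_octonionAut_of_single matB_mul_transpose det_matB (by decide +kernel)

theorem gammaGroup_le_octonionAut : gammaGroup ≤ octonionAut ℚ :=
  (Subgroup.closure_le _).2 <| Set.insert_subset genA_mem_octonionAut <|
    Set.singleton_subset_iff.2 genB_mem_octonionAut

end Generators

section OrbitStabilizer

variable {G α : Type*} [Group G] [MulAction G α]

theorem card_eq_ncard_orbit_mul_card_inf_stabilizer (H : Subgroup G) (a : α) :
    Nat.card H = (orbit H a).ncard * Nat.card ↥(H ⊓ stabilizer G a) := by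
  have hstab : stabilizer H a = (H ⊓ stabilizer G a).subgroupOf H := by
    ext
    simp [Subgroup.mem_subgroupOf, Subgroup.smul_def]
  rw [← Nat.card_congr (orbitProdStabilizerEquivGroup H a), Nat.card_prod, hstab,
    Nat.card_congr (Subgroup.subgroupOfEquivOfLe inf_le_left).toEquiv, Set.ncard_def,
    Set.encard, Nat.card]
  rfl

theorem smul_mem_orbit_iff_of_mem {H : Subgroup G} {g : G} (hg : g ∈ H) {a b : α} :
    g • b ∈ orbit H a ↔ b ∈ orbit H a := by
  rw [← orbit_eq_iff, ← orbit_eq_iff, ← orbit_smul (⟨g, hg⟩ : H) b, Subgroup.mk_smul]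

end OrbitStabilizer

local notation "𝐞" i:max => (Pi.single i 1 : Fin 7 → ℚ)

section Roots

/-- The vectors whose coordinates agree with those of `w` up to sign. -/
def signVariants (w : Fin 7 → ℚ) : Finset (Fin 7 → ℚ) := Fintype.piFinset fun j ↦ {w j, -w j}

/-- The vectors `±eᵢ` with `i ∈ s`. -/
def unitRoots (s : Finset (Fin 7)) : Finset (Fin 7 → ℚ) :=
  s.biUnion fun i ↦ {𝐞 i, -𝐞 i}

/-- The minimal vectors of the lattice of pure Coxeter octonions with nonnegative coordinates, apart
from the standard basis vectors. -/
def halfWeights : List (Fin 7 → ℚ) :=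
  [![1 / 2, 1 / 2, 1 / 2, 1 / 2, 0, 0, 0],
   ![1 / 2, 0, 1 / 2, 0, 1 / 2, 1 / 2, 0],
   ![0, 1 / 2, 1 / 2, 0, 0, 1 / 2, 1 / 2],
   ![0, 0, 1 / 2, 1 / 2, 1 / 2, 0, 1 / 2],
   ![1 / 2, 0, 0, 1 / 2, 0, 1 / 2, 1 / 2],
   ![0, 1 / 2, 0, 1 / 2, 1 / 2, 1 / 2, 0],
   ![1 / 2, 1 / 2, 0, 0, 1 / 2, 0, 1 / 2]]

/-- The minimal vectors of the lattice of pure Coxeter octonions with fractional coordinates. -/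
def halfRoots : Finset (Fin 7 → ℚ) := halfWeights.toFinset.biUnion signVariants

/-- The minimal vectors of the lattice of pure Coxeter octonions: a root system of type `E₇`. -/
def coxeterRoots : Finset (Fin 7 → ℚ) := unitRoots univ ∪ halfRoots

theorem mem_unitRoots {s : Finset (Fin 7)} {v : Fin 7 → ℚ} :
    v ∈ unitRoots s ↔ ∃ i ∈ s, v = 𝐞 i ∨ v = -𝐞 i := by
  simp [unitRoots]

theorem mem_halfRoots {v : Fin 7 → ℚ} :
    v ∈ halfRoots ↔ ∃ w ∈ halfWeights, ∀ j, v j = w j ∨ v j = -w j := by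
  simp [halfRoots, signVariants]

theorem forall_mem_halfRoots {p : (Fin 7 → ℚ) → Prop} :
    (∀ v ∈ halfRoots, p v) ↔ ∀ w ∈ halfWeights, ∀ v ∈ signVariants w, p v := by
  simp only [halfRoots, mem_biUnion, List.mem_toFinset]
  grind

theorem mem_coxeterRoots {v : Fin 7 → ℚ} : v ∈ coxeterRoots ↔
    (∃ i, v = 𝐞 i ∨ v = -𝐞 i) ∨
      ∃ w ∈ halfWeights, ∀ j, v j = w j ∨ v j = -w j := by
  simp [coxeterRoots, mem_unitRoots, mem_halfRoots]

theorem forall_mem_coxeterRoots {p : (Fin 7 → ℚ) → Prop} : (∀ v ∈ coxeterRoots, p v) ↔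
    (∀ v ∈ unitRoots univ, p v) ∧ ∀ w ∈ halfWeights, ∀ v ∈ signVariants w, p v := by
  rw [coxeterRoots, forall_mem_union, forall_mem_halfRoots]

theorem single_mem_unitRoots {s : Finset (Fin 7)} {i : Fin 7} (hi : i ∈ s) :
    𝐞 i ∈ unitRoots s :=
  mem_unitRoots.2 ⟨i, hi, .inl rfl⟩

theorem unitRoots_subset_coxeterRoots (s : Finset (Fin 7)) : unitRoots s ⊆ coxeterRoots :=
  (biUnion_subset_biUnion_of_subset_left _ (subset_univ s)).trans subset_union_left

theorem card_coxeterRoots : #coxeterRoots = 126 := by decide +kernel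

theorem genB_smul (v : Fin 7 → ℚ) : genB • v = ![-v 5, v 1, v 2, v 6, v 4, v 0, -v 3] := by
  ext j
  fin_cases j <;> simp [Units.smul_def, genB, matB, mulVec, dotProduct, Fin.sum_univ_seven]

theorem genM_smul (v : Fin 7 → ℚ) : genM • v = ![-v 4, -v 5, -v 2, v 0, v 3, v 6, -v 1] := by
  ext j
  fin_cases j <;> simp [Units.smul_def, coe_genM, mulVec, dotProduct, Fin.sum_univ_seven]

theorem genA_smul_mem_coxeterRoots : ∀ v ∈ coxeterRoots, genA • v ∈ coxeterRoots := by
  change ∀ v ∈ coxeterRoots, matA *ᵥ v ∈ coxeterRoots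
  rw [forall_mem_coxeterRoots]
  simp only [mem_coxeterRoots]
  decide +kernel

theorem genB_smul_mem_coxeterRoots : ∀ v ∈ coxeterRoots, genB • v ∈ coxeterRoots := by
  simp only [genB_smul]
  rw [forall_mem_coxeterRoots]
  simp only [mem_coxeterRoots]
  decide +kernel

open scoped Pointwise in
theorem smul_mem_coxeterRoots {g : GL (Fin 7) ℚ} (hg : g ∈ gammaGroup) {v : Fin 7 → ℚ}
    (hv : v ∈ coxeterRoots) : g • v ∈ coxeterRoots := by
  have hle : gammaGroup ≤ stabilizer (GL (Fin 7) ℚ) coxeterRoots :=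
    (Subgroup.closure_le _).2 <| Set.insert_subset
      (mem_stabilizer_finset'.2 genA_smul_mem_coxeterRoots)
      (Set.singleton_subset_iff.2 (mem_stabilizer_finset'.2 genB_smul_mem_coxeterRoots))
  exact mem_stabilizer_finset'.1 (hle hg) hv

end Roots

section Order

theorem genM_smul_single_two : genM • 𝐞 2 = -𝐞 2 := by
  rw [genM_smul]
  decide +kernel

theorem genB_smul_single_two : genB • 𝐞 2 = 𝐞 2 := by
  rw [genB_smul]
  decide +kernel

theorem exists_eq_smul_single_three : ∀ v ∈ unitRoots {2}ᶜ, ∃ (m : Fin 3) (b : Fin 4),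
    v = (genM ^ 2) ^ m.val • genB ^ b.val • 𝐞 3 := by
  simp_rw [← pow_mul, ← smul_iterate, genM_smul, genB_smul]
  decide +kernel

theorem exists_eq_smul_single_four : ∀ v ∈ unitRoots {2, 3, 5}ᶜ, ∃ (q : Fin 2) (p : Fin 4),
    v = (genM⁻¹ * genB * genM) ^ q.val • ((genM * genB) ^ 2) ^ p.val •
      𝐞 4 := by
  simp_rw [← pow_mul, ← smul_iterate, mul_smul, genM_smul, genB_smul]
  decide +kernel

theorem exists_genA_smul_mem_unitRoots : ∀ r ∈ halfRoots, ∃ (m : Fin 3) (b : Fin 4),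
    genA • genB ^ b.val • genM ^ m.val • r ∈ unitRoots univ := by
  have h : ∀ r ∈ halfRoots, ∃ (m : Fin 3) (b : Fin 4) (i : Fin 7) (c : ℤˣ),
      genB ^ b.val • genM ^ m.val • r = matAᵀ *ᵥ Pi.single i (c : ℚ) := by
    simp_rw [← smul_iterate, genM_smul, genB_smul]
    rw [forall_mem_halfRoots]
    decide +kernel
  intro r hr
  obtain ⟨m, b, i, c, h⟩ := h r hr
  refine ⟨m, b, mem_unitRoots.2 ⟨i, mem_univ i, ?_⟩⟩
  have : genA • genB ^ b.val • genM ^ m.val • r = Pi.single i (c : ℚ) := by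
    rw [h, ← eq_inv_smul_iff]
    rfl
  rw [this]
  rcases Int.units_eq_one_or c with rfl | rfl <;> simp [Pi.single_neg]

/-- The pairs `u, v` of pure octonions such that `u + v + u × v` lies in the dual of the lattice of
pure Coxeter octonions. This `Γ`-invariant relation to `e₂` separates the `±eⱼ` from the minimal
vectors with fractional coordinates. -/
def DualCollinear (u v : Fin 7 → ℚ) : Prop :=
  ∀ s ∈ coxeterRoots, ((u + v + octonionCross ℚ u v) ⬝ᵥ s).isInt

theorem DualCollinear.smul {u v : Fin 7 → ℚ} (h : DualCollinear u v) {g : GL (Fin 7) ℚ}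
    (hg : g ∈ gammaGroup) : DualCollinear (g • u) (g • v) := by
  intro s hs
  have hg' := gammaGroup_le_octonionAut hg
  rw [hg'.2, ← smul_add, ← smul_add, ← smul_inv_smul g s, smul_dotProduct_smul_of_mem hg']
  exact h _ (smul_mem_coxeterRoots (inv_mem hg) hs)

theorem dualCollinear_single_two : ∀ j ≠ 2, DualCollinear (𝐞 2) (𝐞 j) := by
  simp only [DualCollinear]
  simp_rw [forall_mem_coxeterRoots]
  decide +kernel

theorem not_dualCollinear_single_two {r : Fin 7 → ℚ} (hr : r ∈ halfRoots) :
    ¬ DualCollinear (𝐞 2) r := by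
  have hpair : ∀ r ∈ halfRoots,
      (∃ i, ¬ ((𝐞 2 + r + octonionCross ℚ (𝐞 2) r) ⬝ᵥ 𝐞 i).isInt) ∨
        ∃ s ∈ halfWeights, ¬ ((𝐞 2 + r + octonionCross ℚ (𝐞 2) r) ⬝ᵥ s).isInt := by
    rw [forall_mem_halfRoots]
    decide +kernel
  intro h
  rcases hpair r hr with ⟨i, hi⟩ | ⟨s, hs, hi⟩
  · exact hi (h _ (unitRoots_subset_coxeterRoots _ (single_mem_unitRoots (mem_univ i))))
  · exact hi (h s (mem_coxeterRoots.2 (.inr ⟨s, hs, fun j ↦ .inl rfl⟩)))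

theorem smul_single_mem_unitRoots {g : GL (Fin 7) ℚ} (hg : g ∈ gammaGroup)
    (h₂ : g ∈ stabilizer _ (𝐞 2)) {j : Fin 7} (hj : j ≠ 2) : g • 𝐞 j ∈ unitRoots univ := by
  have hroot : g • 𝐞 j ∈ coxeterRoots :=
    smul_mem_coxeterRoots hg (unitRoots_subset_coxeterRoots _ (single_mem_unitRoots (mem_univ j)))
  refine (mem_union.1 hroot).resolve_right fun hhalf ↦ not_dualCollinear_single_two hhalf ?_
  simpa only [mem_stabilizer_iff.1 h₂] using (dualCollinear_single_two j hj).smul hg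

theorem smul_single_mem_unitRoots_compl {g : GL (Fin 7) ℚ} (hg : g ∈ gammaGroup)
    {s : Finset (Fin 7)} (hs : ∀ i ∈ s, g ∈ stabilizer _ (𝐞 i)) (h₂ : 2 ∈ s) {j : Fin 7}
    (hj : j ∉ s) : g • 𝐞 j ∈ unitRoots sᶜ := by
  obtain ⟨k, -, hk⟩ := mem_unitRoots.1 <|
    smul_single_mem_unitRoots hg (hs 2 h₂) (ne_of_mem_of_not_mem h₂ hj).symm
  refine mem_unitRoots.2 ⟨k, mem_compl.2 fun hks ↦ ?_, hk⟩
  have hperp := smul_dotProduct_smul_of_mem (gammaGroup_le_octonionAut hg) (𝐞 j) (𝐞 k)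
  have hjk : j ≠ k := (ne_of_mem_of_not_mem hks hj).symm
  rw [mem_stabilizer_iff.1 (hs k hks)] at hperp
  rcases hk with hk | hk <;> simp [hk, hjk] at hperp

theorem orbit_single_three :
    orbit ↥(gammaGroup ⊓ stabilizer _ (𝐞 2)) (𝐞 3) = unitRoots {2}ᶜ := by
  ext v
  constructor
  · rintro ⟨⟨g, hg, h₂⟩, rfl⟩
    exact smul_single_mem_unitRoots_compl hg (by simpa using h₂) (by simp) (by simp)
  · intro hv
    obtain ⟨m, b, rfl⟩ := exists_eq_smul_single_three v hv
    have hM : genM ^ 2 ∈ gammaGroup ⊓ stabilizer _ (𝐞 2) :=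
      ⟨pow_mem genM_mem 2, by simp [pow_two, mul_smul, genM_smul_single_two]⟩
    have hB : genB ∈ gammaGroup ⊓ stabilizer _ (𝐞 2) := ⟨genB_mem, genB_smul_single_two⟩
    rw [smul_mem_orbit_iff_of_mem (pow_mem hM _), smul_mem_orbit_iff_of_mem (pow_mem hB _)]
    exact mem_orbit_self _

theorem orbit_single_four :
    orbit ↥(gammaGroup ⊓ stabilizer _ (𝐞 2) ⊓ stabilizer _ (𝐞 3)) (𝐞 4) =
      unitRoots {2, 3, 5}ᶜ := by
  ext v
  constructor
  · rintro ⟨⟨g, ⟨hg, h₂⟩, h₃⟩, rfl⟩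
    have h₅ : g • 𝐞 5 = 𝐞 5 := by
      have hcross := (gammaGroup_le_octonionAut hg).2 (𝐞 2) (𝐞 3)
      rwa [h₂, h₃, show octonionCross ℚ (𝐞 2) (𝐞 3) = 𝐞 5 from octonionCross_single 2,
        eq_comm] at hcross
    refine smul_single_mem_unitRoots_compl hg ?_ (by simp) (by decide)
    simpa using ⟨h₂, h₃, h₅⟩
  · intro hv
    obtain ⟨q, p, rfl⟩ := exists_eq_smul_single_four v hv
    have hfix (i : Fin 7) (hi : i = 2 ∨ i = 3) : (genM⁻¹ * genB * genM) • 𝐞 i = 𝐞 i ∧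
        (genM * genB) ^ 2 • 𝐞 i = 𝐞 i := by
      simp_rw [pow_two, mul_smul, inv_smul_eq_iff, genM_smul, genB_smul]
      revert i
      decide +kernel
    have hQ : genM⁻¹ * genB * genM ∈
        gammaGroup ⊓ stabilizer _ (𝐞 2) ⊓ stabilizer _ (𝐞 3) :=
      ⟨⟨gammaGroup.mul_mem (mul_mem (inv_mem genM_mem) genB_mem) genM_mem, (hfix 2 (.inl rfl)).1⟩,
        (hfix 3 (.inr rfl)).1⟩
    have hP : (genM * genB) ^ 2 ∈ gammaGroup ⊓ stabilizer _ (𝐞 2) ⊓ stabilizer _ (𝐞 3) :=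
      ⟨⟨pow_mem (mul_mem genM_mem genB_mem) 2, (hfix 2 (.inl rfl)).2⟩, (hfix 3 (.inr rfl)).2⟩
    rw [smul_mem_orbit_iff_of_mem (pow_mem hQ _), smul_mem_orbit_iff_of_mem (pow_mem hP _)]
    exact mem_orbit_self _

theorem mem_orbit_single_two_of_mem_unitRoots {v : Fin 7 → ℚ} (hv : v ∈ unitRoots univ) :
    v ∈ orbit gammaGroup (𝐞 2) := by
  have hiff {v : Fin 7 → ℚ} (hv : v ∈ unitRoots {2}ᶜ) :
      v ∈ orbit gammaGroup (𝐞 2) ↔ 𝐞 3 ∈ orbit gammaGroup (𝐞 2) := by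
    obtain ⟨m, b, rfl⟩ := exists_eq_smul_single_three v hv
    rw [smul_mem_orbit_iff_of_mem (pow_mem (pow_mem genM_mem 2) _),
      smul_mem_orbit_iff_of_mem (pow_mem genB_mem _)]
  have hfive : 𝐞 5 ∈ orbit gammaGroup (𝐞 2) := by
    have hA : matA ^ 4 *ᵥ 𝐞 2 = 𝐞 5 := by decide +kernel
    exact ⟨⟨genA ^ 4, pow_mem genA_mem 4⟩, hA⟩
  obtain ⟨i, -, hi⟩ := mem_unitRoots.1 hv
  by_cases h₂ : i = 2
  · subst h₂
    rcases hi with rfl | rfl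
    · exact mem_orbit_self _
    · exact ⟨⟨genM, genM_mem⟩, genM_smul_single_two⟩
  · exact (hiff (mem_unitRoots.2 ⟨i, by simpa using h₂, hi⟩)).2
      ((hiff (single_mem_unitRoots (by decide))).1 hfive)

theorem orbit_single_two : orbit gammaGroup (𝐞 2) = coxeterRoots := by
  ext v
  constructor
  · rintro ⟨⟨g, hg⟩, rfl⟩
    exact smul_mem_coxeterRoots hg
      (unitRoots_subset_coxeterRoots _ (single_mem_unitRoots (mem_univ 2)))
  · intro hv
    rcases mem_union.1 hv with hv | hv
    · exact mem_orbit_single_two_of_mem_unitRoots hv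
    · obtain ⟨m, b, h⟩ := exists_genA_smul_mem_unitRoots v hv
      have h := mem_orbit_single_two_of_mem_unitRoots h
      rwa [smul_mem_orbit_iff_of_mem genA_mem, smul_mem_orbit_iff_of_mem (pow_mem genB_mem _),
        smul_mem_orbit_iff_of_mem (pow_mem genM_mem _)] at h

theorem card_gammaGroup : Nat.card gammaGroup = 12096 := by
  have htriv : gammaGroup ⊓ stabilizer _ (𝐞 2) ⊓ stabilizer _ (𝐞 3) ⊓
      stabilizer _ (𝐞 4) = ⊥ := by
    refine (Subgroup.eq_bot_iff_forall _).2 ?_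
    rintro g ⟨⟨⟨hg, h₂⟩, h₃⟩, h₄⟩
    exact eq_one_of_mem_octonionAut (gammaGroup_le_octonionAut hg) (k := 2) h₂ h₃ h₄
  have hthree : #(unitRoots {2}ᶜ) = 12 := by decide +kernel
  have hfour : #(unitRoots {2, 3, 5}ᶜ) = 8 := by decide +kernel
  rw [card_eq_ncard_orbit_mul_card_inf_stabilizer gammaGroup (𝐞 2),
    card_eq_ncard_orbit_mul_card_inf_stabilizer _ (𝐞 3),
    card_eq_ncard_orbit_mul_card_inf_stabilizer _ (𝐞 4),
    htriv, orbit_single_two, orbit_single_three, orbit_single_four]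
  simp only [Set.ncard_coe_finset, card_coxeterRoots, hthree, hfour, Subgroup.card_bot]

end Order

section InvariantForms

variable {ι : Type*} {F : (Fin 7 → ℚ) [⋀^ι]→ₗ[ℚ] ℚ}

/-- The diagonals of three diagonal matrices in `Γ`. -/
def diagonalSigns : Fin 3 → Fin 7 → ℚ :=
  ![![-1, 1, 1, -1, 1, -1, -1], ![-1, 1, -1, -1, -1, 1, 1], ![1, -1, 1, -1, -1, -1, 1]]

theorem exists_mem_gammaGroup_eq_diagonal (t : Fin 3) :
    ∃ g ∈ gammaGroup, g.1 = diagonal (diagonalSigns t) := by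
  have hB : genB ^ 2 ∈ gammaGroup := pow_mem genB_mem 2
  have hM : genM ∈ gammaGroup := genM_mem
  fin_cases t
  · exact ⟨genB ^ 2, hB, by change matB ^ 2 = _; decide +kernel⟩
  · exact ⟨genM ^ 3, pow_mem hM 3, by rw [Units.val_pow_eq_pow_val, coe_genM]; decide +kernel⟩
  · refine ⟨genM * genB ^ 2 * genM⁻¹, mul_mem (mul_mem hM hB) (inv_mem hM), ?_⟩
    rw [Units.val_mul, Units.mul_inv_eq_iff_eq_mul, Units.val_mul, coe_genM]
    change _ * matB ^ 2 = _
    decide +kernel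

theorem exists_prod_diagonalSigns_eq_neg_one : ∀ s : Finset (Fin 7), s.Nonempty → #s ≤ 3 →
    (∀ k, s ≠ univ.image (fanoLine k)) → ∃ t, ∏ i ∈ s, diagonalSigns t i = -1 := by
  decide +kernel

theorem apply_single_eq_zero_of_image_ne_fanoLine [Fintype ι] [Nonempty ι]
    (hF : ∀ g ∈ gammaGroup, ∀ v, F (g • v) = F v) {r : ι → Fin 7} (hr : Function.Injective r)
    (hcard : Fintype.card ι ≤ 3) (hline : ∀ k, univ.image r ≠ univ.image (fanoLine k)) :
    F (fun i ↦ 𝐞 (r i)) = 0 := by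
  obtain ⟨t, ht⟩ := exists_prod_diagonalSigns_eq_neg_one (univ.image r)
    (univ_nonempty.image r) (card_image_le.trans hcard) hline
  obtain ⟨g, hg, hdiag⟩ := exists_mem_gammaGroup_eq_diagonal t
  rw [prod_image hr.injOn] at ht
  exact apply_single_eq_zero_of_smul_eq (hF g hg) hdiag ht

theorem fanoLine_injective : ∀ k, Function.Injective (fanoLine k) := by decide

theorem det_single_comp_fanoLine : ∀ k l,
    det (Matrix.of fun i ↦ (𝐞 (fanoLine l i)) ∘ fanoLine k) = if k = l then 1 else 0 := by
  decide +kernel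

theorem det_single_comp_eq_zero {r : Fin 3 → Fin 7} (hr : Function.Injective r) {k : Fin 7}
    (h : univ.image r ≠ univ.image (fanoLine k)) :
    det (Matrix.of fun i ↦ (𝐞 (r i)) ∘ fanoLine k) = 0 := by
  have hsub : ¬ univ.image (fanoLine k) ⊆ univ.image r := fun hsub ↦ h <| Eq.symm <|
    eq_of_subset_of_card_le hsub <| by
      rw [card_image_of_injective _ hr, card_image_of_injective _ (fanoLine_injective k)]
  simp only [subset_iff, mem_image, mem_univ, true_and, forall_exists_index, not_forall,
    forall_apply_eq_imp_iff, not_exists] at hsub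
  obtain ⟨j, hj⟩ := hsub
  exact det_eq_zero_of_column_eq_zero j fun i ↦ Pi.single_eq_of_ne' (hj i) 1

variable {F : (Fin 7 → ℚ) [⋀^Fin 3]→ₗ[ℚ] ℚ}

theorem apply_eq_sum_fanoLine (hF : ∀ g ∈ gammaGroup, ∀ v, F (g • v) = F v)
    (v : Fin 3 → Fin 7 → ℚ) :
    F v = ∑ k, F (fun i ↦ 𝐞 (fanoLine k i)) * det (Matrix.of fun i ↦ v i ∘ fanoLine k) := by
  let F' : (Fin 7 → ℚ) [⋀^Fin 3]→ₗ[ℚ] ℚ := ∑ k, F (fun i ↦ 𝐞 (fanoLine k i)) •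
    detRowAlternating.compLinearMap (LinearMap.funLeft ℚ ℚ (fanoLine k))
  have hF' (v) : F' v =
      ∑ k, F (fun i ↦ 𝐞 (fanoLine k i)) * det (Matrix.of fun i ↦ v i ∘ fanoLine k) := by
    exact sum_alternatingMap_apply ..
  rw [← hF']
  congr 1
  refine Module.Basis.ext_alternating (Pi.basisFun ℚ (Fin 7)) fun r hr ↦ ?_
  simp only [Pi.basisFun_apply]
  by_cases hline : ∃ k, univ.image r = univ.image (fanoLine k)
  · obtain ⟨k, hk⟩ := hline
    obtain ⟨τ, rfl⟩ : ∃ τ : Equiv.Perm (Fin 3), r = fanoLine k ∘ τ :=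
      exists_perm_eq_comp_of_image_subset hr hk.subset
    have hperm (f : (Fin 7 → ℚ) [⋀^Fin 3]→ₗ[ℚ] ℚ) := f.map_perm (fun i ↦ 𝐞 (fanoLine k i)) τ
    simp only [Function.comp_def] at hperm ⊢
    rw [hperm, hperm, hF']
    simp [det_single_comp_fanoLine]
  · push Not at hline
    rw [apply_single_eq_zero_of_image_ne_fanoLine hF hr (by simp) hline, hF']
    simp [det_single_comp_eq_zero hr (hline _)]

theorem apply_fanoLine_eq_sum (hF : ∀ g ∈ gammaGroup, ∀ v, F (g • v) = F v)
    {g : GL (Fin 7) ℚ} (hg : g ∈ gammaGroup) (l : Fin 7) :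
    F (fun i ↦ 𝐞 (fanoLine l i)) = ∑ k, F (fun i ↦ 𝐞 (fanoLine k i)) *
      (g.1.submatrix (fanoLine k) (fanoLine l)).det := by
  rw [← hF g hg, apply_eq_sum_fanoLine hF]
  refine sum_congr rfl fun k _ ↦ ?_
  rw [← det_transpose]
  congr 2
  ext i j
  simp [Units.smul_def]

theorem apply_fanoLine_eq (hF : ∀ g ∈ gammaGroup, ∀ v, F (g • v) = F v) (l : Fin 7) :
    F (fun i ↦ 𝐞 (fanoLine l i)) = F (fun i ↦ 𝐞 (fanoLine 0 i)) := by
  have hM (l) : F (fun i ↦ 𝐞 (fanoLine l i)) =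
      F (fun i ↦ 𝐞 (fanoLine (![3, 6, 1, 4, 0, 5, 2] l) i)) := by
    have hdet : ∀ l k, (genM.1.submatrix (fanoLine k) (fanoLine l)).det =
        if k = ![3, 6, 1, 4, 0, 5, 2] l then 1 else 0 := by
      rw [coe_genM]
      decide +kernel
    rw [apply_fanoLine_eq_sum hF genM_mem]
    simp [hdet]
  have hB : F (fun i ↦ 𝐞 (fanoLine 0 i)) = F (fun i ↦ 𝐞 (fanoLine 5 i)) := by
    have hdet : ∀ k, (matB.submatrix (fanoLine k) (fanoLine 0)).det = if k = 5 then 1 else 0 := by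
      decide +kernel
    rw [apply_fanoLine_eq_sum hF genB_mem]
    simp [genB, hdet]
  have hA : F (fun i ↦ 𝐞 (fanoLine 0 i)) = F (fun i ↦ 𝐞 (fanoLine 1 i)) * 2⁻¹ +
      F (fun i ↦ 𝐞 (fanoLine 3 i)) * 4⁻¹ + F (fun i ↦ 𝐞 (fanoLine 4 i)) * 4⁻¹ := by
    have hdet : ∀ k, (matA.submatrix (fanoLine k) (fanoLine 0)).det =
        ![0, 2⁻¹, 0, 4⁻¹, 4⁻¹, 0, 0] k := by
      decide +kernel
    rw [apply_fanoLine_eq_sum hF genA_mem]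
    simp [genA, hdet, Fin.sum_univ_seven]
  have h₀ := hM 0
  have h₁ := hM 1
  have h₃ := hM 3
  have h₆ := hM 6
  simp only [Matrix.cons_val] at h₀ h₁ h₃ h₆
  fin_cases l <;> simp only [Fin.mk_one, Fin.reduceFinMk, Fin.zero_eta] <;> linarith

end InvariantForms

section CharpolySum

variable [Fintype gammaGroup]

theorem sum_charpoly_coeff_eq_zero {k : ℕ} (hpos : k ≠ 0) (hk : k < 3) :
    ∑ g : gammaGroup, g.1.1.charpoly.coeff (7 - k) = 0 := by
  have h := sum_charpoly_coeff_eq_sum_minorSum gammaGroup (k := k) (by simp; omega)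
  rw [Fintype.card_fin] at h
  rw [h, sum_eq_zero, mul_zero]
  intro s hs
  have hcard : #s = k := (mem_powersetCard.1 hs).2
  have : Nonempty s := (card_pos.1 (by omega)).to_subtype
  refine apply_single_eq_zero_of_image_ne_fanoLine (fun _ ↦ minorSum_smul gammaGroup _)
    Subtype.val_injective (by simp; omega) fun l hl ↦ ?_
  have hcard_line : #(univ.image (fanoLine l)) = 3 :=
    card_image_of_injective _ (fanoLine_injective l)
  have hcard_s : #(univ.image (Subtype.val : s → Fin 7)) = k := by
    simp [hcard]
  rw [hl] at hcard_s
  omega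

theorem sum_minorSum_fanoLine :
    ∑ k, minorSum gammaGroup (fanoLine k) (fun i ↦ 𝐞 (fanoLine k i)) = Fintype.card gammaGroup :=
  calc
    _ = ∑ k, minorSum gammaGroup (fanoLine k) (fun i ↦ 𝐞 (fanoLine 0 i)) :=
      sum_congr rfl fun k _ ↦ apply_fanoLine_eq (fun _ ↦ minorSum_smul gammaGroup _) k
    _ = ∑ g : gammaGroup, ∑ k, (g.1.1.submatrix (fanoLine k) (fanoLine 0)).det := by
      simp_rw [minorSum_single]
      exact sum_comm
    _ = Fintype.card gammaGroup := by
      simp [sum_det_submatrix_fanoLine (gammaGroup_le_octonionAut (SetLike.coe_mem _))]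

theorem sum_charpoly_coeff_four :
    ∑ g : gammaGroup, g.1.1.charpoly.coeff 4 = -Fintype.card gammaGroup := by
  have hinj : Function.Injective fun k ↦ univ.image (fanoLine k) := by decide
  have hlines : univ.image (fun k ↦ univ.image (fanoLine k)) ⊆ univ.powersetCard 3 := by decide
  calc
    _ = -∑ s ∈ univ.powersetCard 3,
        minorSum gammaGroup (Subtype.val : s → Fin 7) fun i ↦ 𝐞 i.1 := by
      simpa [pow_succ] using sum_charpoly_coeff_eq_sum_minorSum gammaGroup (k := 3) (by simp)
    _ = -∑ k, minorSum gammaGroup (Subtype.val : univ.image (fanoLine k) → Fin 7)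
        fun i ↦ 𝐞 i.1 := by
      rw [← sum_subset hlines, sum_image hinj.injOn]
      intro s hs hline
      have hcard : #s = 3 := (mem_powersetCard.1 hs).2
      have : Nonempty s := (card_pos.1 (by omega)).to_subtype
      refine apply_single_eq_zero_of_image_ne_fanoLine (fun _ ↦ minorSum_smul gammaGroup _)
        Subtype.val_injective (by simp [hcard]) fun l hl ↦ hline ?_
      simpa using ⟨l, by simpa using hl.symm⟩
    _ = -∑ k, minorSum gammaGroup (fanoLine k) fun i ↦ 𝐞 (fanoLine k i) := by
      simp_rw [minorSum_single, det_submatrix_val_image (fanoLine_injective _)]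
    _ = -Fintype.card gammaGroup := by rw [sum_minorSum_fanoLine]

theorem sum_charpoly_gammaGroup :
    ∑ g : gammaGroup, g.1.1.charpoly =
      (Fintype.card gammaGroup : ℚ[X]) * (X ^ 7 - X ^ 4 + X ^ 3 - 1) := by
  have hrefl {i : ℕ} (hi : i ≤ 7) : ∑ g : gammaGroup, g.1.1.charpoly.coeff i =
      -∑ g : gammaGroup, g.1.1.charpoly.coeff (7 - i) := by
    rw [← sum_neg_distrib]
    refine sum_congr rfl fun g _ ↦ ?_
    simpa [pow_succ] using charpoly_coeff_of_mem_specialOrthogonalGroup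
      (gammaGroup_le_octonionAut g.2).1 (i := i) (by simpa)
  have h₇ : ∑ g : gammaGroup, g.1.1.charpoly.coeff 7 = Fintype.card gammaGroup := by
    have (g : gammaGroup) : g.1.1.charpoly.coeff 7 = 1 := by
      simpa [Monic, leadingCoeff] using g.1.1.charpoly_monic
    simp [this]
  have h₆ := sum_charpoly_coeff_eq_zero (k := 1) (by simp) (by simp)
  have h₅ := sum_charpoly_coeff_eq_zero (k := 2) (by simp) (by simp)
  have h₄ := sum_charpoly_coeff_four
  ext i
  rw [finsetSum_coeff, coeff_natCast_mul]
  rcases le_or_gt i 7 with hi | hi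
  · interval_cases i <;> simp [coeff_X_pow, coeff_one, hrefl (i := 0), hrefl (i := 1),
      hrefl (i := 2), hrefl (i := 3), h₇, h₆, h₅, h₄]
  · have hcoeff (g : gammaGroup) : g.1.1.charpoly.coeff i = 0 :=
      coeff_eq_zero_of_natDegree_lt (by simpa)
    simp [hcoeff, coeff_X_pow, coeff_one, hi.ne', show i ≠ 4 by omega, show i ≠ 3 by omega,
      show i ≠ 0 by omega]

end CharpolySum

theorem finsum_mem_subgroup_eq_sum {G M : Type*} [Group G] [AddCommMonoid M] (H : Subgroup G)
    [Fintype H] (f : G → M) : ∑ᶠ g ∈ (H : Set G), f g = ∑ g : H, f g := by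
  rw [← finsum_set_coe_eq_finsum_mem]
  exact finsum_eq_sum_of_fintype _

/-- `A` and `B` are invertible, the subgroup `Γ ⊆ GL₇(ℚ)` they generate is finite of order
`12096`, and `∑_{g ∈ Γ} det (X·I₇ − g) = 12096 (X⁷ − X⁴ + X³ − 1)` in `ℚ[X]`. -/
theorem statement8 :
    IsUnit matA ∧ IsUnit matB ∧
      ∀ uA uB : (Matrix (Fin 7) (Fin 7) ℚ)ˣ,
        (↑uA : Matrix (Fin 7) (Fin 7) ℚ) = matA → (↑uB : Matrix (Fin 7) (Fin 7) ℚ) = matB →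
        Nat.card ↥(Subgroup.closure ({uA, uB} : Set ((Matrix (Fin 7) (Fin 7) ℚ)ˣ))) = 12096 ∧
        (∑ᶠ g ∈ (Subgroup.closure ({uA, uB} : Set ((Matrix (Fin 7) (Fin 7) ℚ)ˣ)) :
              Set ((Matrix (Fin 7) (Fin 7) ℚ)ˣ)),
            Matrix.charpoly (↑g : Matrix (Fin 7) (Fin 7) ℚ))
          = 12096 * (X ^ 7 - X ^ 4 + X ^ 3 - 1) := by
  refine ⟨genA.isUnit, genB.isUnit, fun uA uB hA hB ↦ ?_⟩
  obtain rfl : uA = genA := Units.ext hA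
  obtain rfl : uB = genB := Units.ext hB
  have : Finite gammaGroup := Nat.finite_of_card_ne_zero (by simp [card_gammaGroup])
  have : Fintype gammaGroup := .ofFinite _
  refine ⟨card_gammaGroup, ?_⟩
  change ∑ᶠ g ∈ (gammaGroup : Set (GL (Fin 7) ℚ)), g.1.charpoly = _
  rw [finsum_mem_subgroup_eq_sum, sum_charpoly_gammaGroup, ← Nat.card_eq_fintype_card,
    card_gammaGroup]
  rfl
end
end

section
/- Consider the following 23 labelled weight data: one orthogonal datum with eigenvalue list E = {0}; one orthogonal datum with E = {−22, 0, 22}; one symplectic datum with E = {−w, w} for each w ∈ {11, 15, 17, 19, 21}, and two distinct symplectic data each with E = {−23, 23}; one symplectic datum with E = {−w, −v, v, w} for each pair (w,v) ∈ {(19,7), (21,5), (21,9), (21,13), (23,7), (23,9), (23,13)}; and one symplectic datum with E = {−w, −v, −u, u, v, w} for each triple (w,v,u) ∈ {(23,13,5), (23,15,3), (23,15,7), (23,17,5), (23,17,9), (23,19,3), (23,19,11)}. Call a 'parameter' a finite set S of pairs (π, d), where π is one of these 23 data and d ≥ 1 is an integer which is odd if π is symplectic and even if π is orthogonal, such that the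 multiset ⋃_{(π,d) ∈ S} { e + d − 1 − 2j : e ∈ E(π), 0 ≤ j ≤ d − 1 } equals the set {±1, ±3, ±5, …, ±23} of the 24 odd integers of absolute value at most 23, each with multiplicity one. Then the number of such parameters S is exactly 121. -/
noncomputable section

/-- The 23 labelled weight data: the eigenvalue multiset together with a flag
(`true` = symplectic, `false` = orthogonal). -/
def datum : Fin 23 → Multiset ℤ × Bool :=
  ![({0}, false),
    ({-22, 0, 22}, false),
    ({-11, 11}, true), ({-15, 15}, true), ({-17, 17}, true), ({-19, 19}, true),
    ({-21, 21}, true),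
    ({-23, 23}, true), ({-23, 23}, true),
    ({-19, -7, 7, 19}, true), ({-21, -5, 5, 21}, true), ({-21, -9, 9, 21}, true),
    ({-21, -13, 13, 21}, true), ({-23, -7, 7, 23}, true), ({-23, -9, 9, 23}, true),
    ({-23, -13, 13, 23}, true),
    ({-23, -13, -5, 5, 13, 23}, true), ({-23, -15, -3, 3, 15, 23}, true),
    ({-23, -15, -7, 7, 15, 23}, true), ({-23, -17, -5, 5, 17, 23}, true),
    ({-23, -17, -9, 9, 17, 23}, true), ({-23, -19, -3, 3, 19, 23}, true),
    ({-23, -19, -11, 11, 19, 23}, true)]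

/-- The multiset `{ e + d - 1 - 2j : e ∈ E(π), 0 ≤ j ≤ d - 1 }` contributed by a pair
`(π, d)`. -/
def contrib (i : Fin 23) (d : ℕ) : Multiset ℤ :=
  (datum i).1.bind fun e => (Multiset.range d).map fun j => e + (d : ℤ) - 1 - 2 * (j : ℤ)

/-- The multiset of the 24 odd integers of absolute value at most 23, each with
multiplicity one. -/
def targetMultiset : Multiset ℤ :=
  ((Multiset.range 12).map fun k => (2 * (k : ℤ) + 1)) +
    ((Multiset.range 12).map fun k => -(2 * (k : ℤ) + 1))

/-- A parameter: a finite set `S` of pairs `(π, d)` with `d ≥ 1` odd if `π` is symplectic and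
even if `π` is orthogonal, whose total contributed multiset is `{±1, ±3, …, ±23}`. -/
def IsParameter (S : Finset (Fin 23 × ℕ)) : Prop :=
  (∀ p ∈ S, 1 ≤ p.2 ∧ (if (datum p.1).2 then Odd p.2 else Even p.2)) ∧
    ∑ p ∈ S, contrib p.1 p.2 = targetMultiset

/-! Since the target has no repeated element, each of its elements `x` is covered by exactly one
member of a parameter. Choosing that member `(π, d)` and removing its contribution leaves the same
problem for a smaller target, so the parameters are counted by branching over the possible members
covering the largest weight not yet covered. Comparing cardinalities gives `d ≤ 24`, hence only
finitely many pairs `(π, d)` can occur, and the branching is a small computation. -/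

section Decompositions

variable {ι α : Type*} [DecidableEq α]

/-- The subfamilies of `(f i)_{i ∈ s}` whose sum is the multiset `T`. -/
def decompositions (f : ι → Multiset α) (s : Finset ι) (T : Multiset α) : Finset (Finset ι) :=
  {S ∈ s.powerset | ∑ i ∈ S, f i = T}

/-- The number of leaves of the search tree for decompositions of a multiset into members of the
family `(f i)_{i ∈ s}`: the elements to be covered are taken in the order of the list, and one
branches over the members that cover the current element and fit into what remains. -/
def branchCount (f : ι → Multiset α) (s : Finset ι) : List α → Multiset α → ℕ
  | [], _ => 1
  | x :: l, T =>
    if x ∈ T then ∑ i ∈ s with x ∈ f i ∧ f i ≤ T, branchCount f s l (T - f i)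
    else branchCount f s l T

variable {f : ι → Multiset α} {s S : Finset ι} {T : Multiset α} {i j : ι} {x : α}

theorem mem_decompositions : S ∈ decompositions f s T ↔ S ⊆ s ∧ ∑ i ∈ S, f i = T := by
  rw [decompositions, Finset.mem_filter, Finset.mem_powerset]

theorem le_of_mem_decompositions (hS : S ∈ decompositions f s T) (hi : i ∈ S) : f i ≤ T :=
  (mem_decompositions.1 hS).2 ▸ Finset.single_le_sum_of_canonicallyOrdered hi

theorem decompositions_zero (hf : ∀ i ∈ s, f i ≠ 0) : decompositions f s 0 = {∅} := by
  ext S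
  rw [mem_decompositions, Finset.sum_eq_zero_iff, Finset.mem_singleton]
  constructor
  · rintro ⟨hSs, hzero⟩
    exact Finset.eq_empty_of_forall_notMem fun i hi ↦ hf i (hSs hi) (hzero i hi)
  · rintro rfl
    simp

theorem notMem_of_mem_decompositions_sub (hT : T.Nodup) (hxi : x ∈ f i)
    (hS : S ∈ decompositions f s (T - f i)) : i ∉ S := fun hi ↦
  ((Multiset.mem_sub_of_nodup hT).1
    (Multiset.mem_of_le (le_of_mem_decompositions hS hi) hxi)).2 hxi

theorem eq_of_mem_of_mem_decompositions (hT : T.Nodup) (hS : S ∈ decompositions f s T)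
    (hi : i ∈ S) (hj : j ∈ S) (hxi : x ∈ f i) (hxj : x ∈ f j) : i = j := by
  classical
  by_contra hij
  have hpair : f i + f j ≤ T := by
    rw [← (mem_decompositions.1 hS).2, ← Finset.sum_pair hij]
    exact Finset.sum_le_sum_of_subset (Finset.insert_subset hi (Finset.singleton_subset_iff.2 hj))
  have hdisj : Disjoint (f i) (f j) :=
    (Multiset.nodup_add.1 (Multiset.nodup_of_le hpair hT)).2.2
  exact Multiset.disjoint_left.1 hdisj hxi hxj

theorem insert_mem_decompositions_iff [DecidableEq ι] (his : i ∈ s) (hle : f i ≤ T)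
    (hiS : i ∉ S) :
    insert i S ∈ decompositions f s T ↔ S ∈ decompositions f s (T - f i) := by
  rw [mem_decompositions, mem_decompositions, Finset.sum_insert hiS, Finset.insert_subset_iff,
    and_iff_right his, eq_tsub_iff_add_eq_of_le hle, add_comm]

theorem decompositions_eq_biUnion [DecidableEq ι] (hT : T.Nodup) (hx : x ∈ T) :
    decompositions f s T = ({i ∈ s | x ∈ f i ∧ f i ≤ T} : Finset ι).biUnion
      fun i ↦ (decompositions f s (T - f i)).image (insert i) := by
  ext S
  simp only [Finset.mem_biUnion, Finset.mem_filter, Finset.mem_image]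
  constructor
  · intro hS
    obtain ⟨hSs, hsum⟩ := mem_decompositions.1 hS
    obtain ⟨i, hi, hxi⟩ := Multiset.mem_sum.1 (hsum ▸ hx)
    have hle : f i ≤ T := le_of_mem_decompositions hS hi
    refine ⟨i, ⟨hSs hi, hxi, hle⟩, S.erase i, ?_, Finset.insert_erase hi⟩
    rwa [← insert_mem_decompositions_iff (hSs hi) hle (Finset.notMem_erase i S),
      Finset.insert_erase hi]
  · rintro ⟨i, ⟨his, hxi, hle⟩, S, hS, rfl⟩
    exact (insert_mem_decompositions_iff his hle
      (notMem_of_mem_decompositions_sub hT hxi hS)).2 hS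

theorem injOn_insert_decompositions_sub [DecidableEq ι] (hT : T.Nodup) (hxi : x ∈ f i) :
    Set.InjOn (insert i) (decompositions f s (T - f i) : Set (Finset ι)) := by
  intro S hS S' hS' heq
  rw [← Finset.erase_insert (notMem_of_mem_decompositions_sub hT hxi hS), heq,
    Finset.erase_insert (notMem_of_mem_decompositions_sub hT hxi hS')]

theorem card_decompositions_eq_sum (hT : T.Nodup) (hx : x ∈ T) :
    (decompositions f s T).card =
      ∑ i ∈ s with x ∈ f i ∧ f i ≤ T, (decompositions f s (T - f i)).card := by
  classical
  rw [decompositions_eq_biUnion hT hx, Finset.card_biUnion]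
  · exact Finset.sum_congr rfl fun i hi ↦ Finset.card_image_of_injOn
      (injOn_insert_decompositions_sub hT (Finset.mem_filter.1 hi).2.1)
  · intro i hi j hj hij
    refine Finset.disjoint_left.2 fun S hSi hSj ↦ hij ?_
    have hS : S ∈ decompositions f s T := by
      rw [decompositions_eq_biUnion hT hx]
      exact Finset.mem_biUnion.2 ⟨i, hi, hSi⟩
    have hmem {k : ι} (hSk : S ∈ (decompositions f s (T - f k)).image (insert k)) : k ∈ S := by
      obtain ⟨S', -, rfl⟩ := Finset.mem_image.1 hSk
      exact Finset.mem_insert_self k S'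
    exact eq_of_mem_of_mem_decompositions hT hS (hmem hSi) (hmem hSj)
      (Finset.mem_filter.1 hi).2.1 (Finset.mem_filter.1 hj).2.1

theorem card_decompositions_eq_branchCount (hf : ∀ i ∈ s, f i ≠ 0) {l : List α} (hT : T.Nodup)
    (hl : ∀ y ∈ T, y ∈ l) : (decompositions f s T).card = branchCount f s l T := by
  induction l generalizing T with
  | nil =>
    obtain rfl : T = 0 := Multiset.eq_zero_of_forall_notMem fun y hy ↦ List.not_mem_nil (hl y hy)
    rw [decompositions_zero hf, Finset.card_singleton, branchCount]
  | cons x l ih =>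
    rw [branchCount]
    split_ifs with hx
    · rw [card_decompositions_eq_sum hT hx]
      refine Finset.sum_congr rfl fun i hi ↦ ih (Multiset.nodup_of_le tsub_le_self hT) fun y hy ↦ ?_
      obtain ⟨hyT, hyi⟩ := (Multiset.mem_sub_of_nodup hT).1 hy
      have hyx : y ≠ x := ne_of_mem_of_not_mem (Finset.mem_filter.1 hi).2.1 hyi |>.symm
      exact List.mem_of_ne_of_mem hyx (hl y hyT)
    · exact ih hT fun y hy ↦ List.mem_of_ne_of_mem (ne_of_mem_of_not_mem hy hx) (hl y hy)

end Decompositions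

theorem card_contrib (i : Fin 23) (d : ℕ) : (contrib i d).card = (datum i).1.card * d := by
  simp [contrib, Multiset.card_bind]

theorem card_datum_pos (i : Fin 23) : 0 < (datum i).1.card := by
  decide +revert

theorem contrib_ne_zero (i : Fin 23) {d : ℕ} (hd : 1 ≤ d) : contrib i d ≠ 0 := by
  rw [← Multiset.card_pos, card_contrib]
  exact Nat.mul_pos (card_datum_pos i) hd

/-- The target weights in the order `23, 21, …, -23` in which they get covered. -/
def descendingWeights : List ℤ :=
  (List.range 24).map fun k : ℕ ↦ 23 - 2 * (k : ℤ)

theorem targetMultiset_eq_coe_descendingWeights :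
    targetMultiset = (descendingWeights : Multiset ℤ) := by
  decide +kernel

theorem nodup_targetMultiset : targetMultiset.Nodup := by
  rw [targetMultiset_eq_coe_descendingWeights, Multiset.coe_nodup]
  exact List.nodup_range.map fun a b hab ↦ by grind

theorem le_of_contrib_le_targetMultiset {i : Fin 23} {d : ℕ} (h : contrib i d ≤ targetMultiset) :
    d ≤ 24 :=
  calc
    d ≤ (datum i).1.card * d := Nat.le_mul_of_pos_left d (card_datum_pos i)
    _ = (contrib i d).card := (card_contrib i d).symm
    _ ≤ targetMultiset.card := Multiset.card_le_card h
    _ = 24 := by simp [targetMultiset]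

/-- Arthur's sign condition on a pair `(π, d)`, as it appears in `IsParameter`; reducible so that
decidability is inferred from its body. -/
abbrev IsAdmissible (p : Fin 23 × ℕ) : Prop :=
  1 ≤ p.2 ∧ (if (datum p.1).2 then Odd p.2 else Even p.2)

/-- The pairs `(π, d)` that can occur in a parameter. -/
def constituents : Finset (Fin 23 × ℕ) :=
  {p ∈ Finset.univ ×ˢ Finset.range 25 | IsAdmissible p ∧ contrib p.1 p.2 ≤ targetMultiset}

theorem mem_constituents {p : Fin 23 × ℕ} :
    p ∈ constituents ↔ IsAdmissible p ∧ contrib p.1 p.2 ≤ targetMultiset := by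
  rw [constituents, Finset.mem_filter, and_iff_right_of_imp]
  rintro ⟨-, hle⟩
  simpa using Nat.lt_succ_of_le (le_of_contrib_le_targetMultiset hle)

theorem isParameter_iff_mem_decompositions {S : Finset (Fin 23 × ℕ)} :
    IsParameter S ↔
      S ∈ decompositions (fun p ↦ contrib p.1 p.2) constituents targetMultiset := by
  rw [mem_decompositions]
  constructor
  · rintro ⟨hadm, hsum⟩
    have hS : S ∈ decompositions (fun p ↦ contrib p.1 p.2) S targetMultiset :=
      mem_decompositions.2 ⟨subset_rfl, hsum⟩
    exact ⟨fun p hp ↦ mem_constituents.2 ⟨hadm p hp, (le_of_mem_decompositions hS hp :)⟩, hsum⟩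
  · rintro ⟨hsub, hsum⟩
    exact ⟨fun p hp ↦ (mem_constituents.1 (hsub hp)).1, hsum⟩

theorem branchCount_constituents :
    branchCount (fun p ↦ contrib p.1 p.2) constituents descendingWeights targetMultiset = 121 := by
  decide +kernel

/-- There are exactly `121` parameters. -/
theorem statement9 : Nat.card {S : Finset (Fin 23 × ℕ) // IsParameter S} = 121 := by
  have hne : ∀ p ∈ constituents, contrib p.1 p.2 ≠ 0 := fun p hp ↦
    contrib_ne_zero p.1 (mem_constituents.1 hp).1.1
  have hcover : ∀ x ∈ targetMultiset, x ∈ descendingWeights := fun x hx ↦ by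
    rwa [targetMultiset_eq_coe_descendingWeights, Multiset.mem_coe] at hx
  rw [Nat.card_congr (Equiv.subtypeEquivRight fun _ ↦ isParameter_iff_mem_decompositions),
    Nat.card_eq_finsetCard, card_decompositions_eq_branchCount hne nodup_targetMultiset hcover,
    branchCount_constituents]
end
end
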